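/- arXiv:2112.01280 — 2 statements merged into one kernel-verified Lean document; each statement's English description precedes it below -/
import Mathlib

section
/- Under Assumptions (W) and (Lip), the M equivalence classes algorithm with Boltzmann policies converges for all sufficiently high temperatures η > 0: defining Φ̂_η(𝛍) as the block-constant policy ensemble with Φ̂_η(𝛍)^α_t(u|x) = exp(Q^𝛍_{α_m}(t,x,u)/η) / Σ_{u'∈𝒰} exp(Q^𝛍_{α_m}(t,x,u')/η) for α ∈ Ĩ_m, there exists η₀ > 0 such that for every η > η₀ the iteration 𝛍^{n+1} = Ψ̂(Φ̂_η(𝛍^n)) converges to a fixed point. -/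
open MeasureTheory Filter
open scoped BigOperators

namespace GMFG

variable {𝒳 𝒰 : Type*}

/-- The probability simplex 𝒫(𝒳) on a finite set, as probability mass functions. -/
def simplex (𝒳 : Type*) [Fintype 𝒳] : Set (𝒳 → ℝ) :=
  {p | (∀ x, 0 ≤ p x) ∧ ∑ x, p x = 1}

/-- The set ℬ₁(𝒳) of (sub-probability) measures with total mass at most 1,
as mass functions. -/
def subProb (𝒳 : Type*) [Fintype 𝒳] : Set (𝒳 → ℝ) :=
  {p | (∀ x, 0 ≤ p x) ∧ ∑ x, p x ≤ 1}

/-- L¹ distance between measures on a finite set. -/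
noncomputable def l1dist [Fintype 𝒳] (ν ν' : 𝒳 → ℝ) : ℝ := ∑ x, |ν x - ν' x|

/-- Markovian feedback policies π ∈ Π = 𝒫(𝒰)^{𝒯×𝒳}. -/
def IsPolicy [Fintype 𝒰] (π : ℕ → 𝒳 → 𝒰 → ℝ) : Prop :=
  ∀ t x, (∀ u, 0 ≤ π t x u) ∧ ∑ u, π t x u = 1

/-- P : 𝒳×𝒰×ℬ₁(𝒳) → 𝒫(𝒳) is a transition kernel. -/
def IsKernel [Fintype 𝒳] [Fintype 𝒰] (P : 𝒳 → 𝒰 → (𝒳 → ℝ) → 𝒳 → ℝ) : Prop :=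
  ∀ x u ν, ν ∈ subProb 𝒳 → P x u ν ∈ simplex 𝒳

/-- Lipschitz continuity of the transition kernel w.r.t. the L¹ norm. -/
def KernelLipschitz [Fintype 𝒳] [Fintype 𝒰] (P : 𝒳 → 𝒰 → (𝒳 → ℝ) → 𝒳 → ℝ) (L : ℝ) : Prop :=
  ∀ x u ν ν', ν ∈ subProb 𝒳 → ν' ∈ subProb 𝒳 → l1dist (P x u ν) (P x u ν') ≤ L * l1dist ν ν'

/-- Lipschitz continuity of the reward w.r.t. the L¹ norm. -/
def RewardLipschitz [Fintype 𝒳] [Fintype 𝒰] (r : 𝒳 → 𝒰 → (𝒳 → ℝ) → ℝ) (L : ℝ) : Prop :=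
  ∀ x u ν ν', ν ∈ subProb 𝒳 → ν' ∈ subProb 𝒳 → |r x u ν - r x u ν'| ≤ L * l1dist ν ν'

/-- A graphon: symmetric, measurable, [0,1]-valued. -/
def IsGraphon (W : ℝ → ℝ → ℝ) : Prop :=
  Measurable (Function.uncurry W) ∧ (∀ a b, W a b = W b a) ∧ ∀ a b, W a b ∈ Set.Icc (0:ℝ) 1

/-- Lipschitz continuity of a graphon on [0,1]². -/
def GraphonLipschitz (W : ℝ → ℝ → ℝ) (L : ℝ) : Prop :=
  ∀ a b a' b' : ℝ, a ∈ Set.Icc (0:ℝ) 1 → b ∈ Set.Icc (0:ℝ) 1 → a' ∈ Set.Icc (0:ℝ) 1 →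
    b' ∈ Set.Icc (0:ℝ) 1 → |W a b - W a' b'| ≤ L * (|a - a'| + |b - b'|)

/-- The neighborhood mean field 𝔾^α = ∫₀¹ W(α,β) ν^β dβ of a state marginal ensemble ν. -/
noncomputable def nbhd [Fintype 𝒳] (W : ℝ → ℝ → ℝ) (ν : ℝ → 𝒳 → ℝ) (α : ℝ) : 𝒳 → ℝ :=
  fun x => ∫ β in Set.Ioc (0:ℝ) 1, W α β * ν β x

/-- 𝛍 = Ψ(𝛑): the (measurable) mean field ensemble generated by the policy ensemble 𝛑,
via μ^α_0 = μ₀ and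
μ^α_{t+1}(x') = Σ_{x,u} μ^α_t(x) π^α_t(u|x) P(x'|x,u,𝔾^α_t). -/
def IsMeanFieldOf [Fintype 𝒳] [Fintype 𝒰] (W : ℝ → ℝ → ℝ) (P : 𝒳 → 𝒰 → (𝒳 → ℝ) → 𝒳 → ℝ)
    (μ0 : 𝒳 → ℝ) (πe : ℝ → ℕ → 𝒳 → 𝒰 → ℝ) (μ : ℕ → ℝ → 𝒳 → ℝ) : Prop :=
  (∀ t x, Measurable fun α => μ t α x) ∧
  (∀ α ∈ Set.Icc (0:ℝ) 1, μ 0 α = μ0) ∧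
  ∀ t : ℕ, ∀ α ∈ Set.Icc (0:ℝ) 1, ∀ x' : 𝒳,
    μ (t+1) α x' = ∑ x, μ t α x * ∑ u, πe α t x u * P x u (nbhd W (μ t) α) x'

/-- The law of the state of a single mean field agent with neighborhood mean field
G and policy π: X_0 ∼ μ₀, U_t ∼ π_t(·|X_t), X_{t+1} ∼ P(·|X_t,U_t,G_t). -/
noncomputable def stateLaw [Fintype 𝒳] [Fintype 𝒰] (P : 𝒳 → 𝒰 → (𝒳 → ℝ) → 𝒳 → ℝ)
    (μ0 : 𝒳 → ℝ) (G : ℕ → 𝒳 → ℝ) (π : ℕ → 𝒳 → 𝒰 → ℝ) : ℕ → 𝒳 → ℝ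
  | 0 => μ0
  | (t+1) => fun x' => ∑ x, stateLaw P μ0 G π t x * ∑ u, π t x u * P x u (G t) x'

/-- Mean field objective J(π) = E[Σ_{t<T} r(X_t,U_t,G_t)] of a single agent whose
neighborhood mean field is G. -/
noncomputable def Jmf [Fintype 𝒳] [Fintype 𝒰] (T : ℕ) (r : 𝒳 → 𝒰 → (𝒳 → ℝ) → ℝ)
    (P : 𝒳 → 𝒰 → (𝒳 → ℝ) → 𝒳 → ℝ) (μ0 : 𝒳 → ℝ) (G : ℕ → 𝒳 → ℝ) (π : ℕ → 𝒳 → 𝒰 → ℝ) : ℝ :=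
  ∑ t ∈ Finset.range T, ∑ x, stateLaw P μ0 G π t x * ∑ u, π t x u * r x u (G t)

/-- A Graphon Mean Field Equilibrium: a measurable policy ensemble 𝛑 and mean field
ensemble 𝛍 with 𝛍 = Ψ(𝛑) and π^α optimal for J^𝛍_α for every α ∈ [0,1]. -/
def IsGMFE [Fintype 𝒳] [Fintype 𝒰] (T : ℕ) (W : ℝ → ℝ → ℝ) (P : 𝒳 → 𝒰 → (𝒳 → ℝ) → 𝒳 → ℝ)
    (r : 𝒳 → 𝒰 → (𝒳 → ℝ) → ℝ) (μ0 : 𝒳 → ℝ)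
    (πe : ℝ → ℕ → 𝒳 → 𝒰 → ℝ) (μ : ℕ → ℝ → 𝒳 → ℝ) : Prop :=
  (∀ t x u, Measurable fun α => πe α t x u) ∧
  (∀ α ∈ Set.Icc (0:ℝ) 1, IsPolicy (πe α)) ∧
  IsMeanFieldOf W P μ0 πe μ ∧
  ∀ α ∈ Set.Icc (0:ℝ) 1, ∀ π' : ℕ → 𝒳 → 𝒰 → ℝ, IsPolicy π' →
    Jmf T r P μ0 (fun t => nbhd W (μ t) α) π' ≤ Jmf T r P μ0 (fun t => nbhd W (μ t) α) (πe α)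

/-- α ↦ π^α is Lipschitz continuous up to a finite set D of discontinuities. -/
def EnsembleLipschitzUpTo [Fintype 𝒳] [Fintype 𝒰] (πe : ℝ → ℕ → 𝒳 → 𝒰 → ℝ) : Prop :=
  ∃ (L : ℝ) (D : Finset ℝ), ∀ (t : ℕ) (x : 𝒳) (u : 𝒰),
    ∀ α ∈ Set.Icc (0:ℝ) 1, ∀ β ∈ Set.Icc (0:ℝ) 1,
      (∀ d ∈ D, d ∉ Set.uIcc α β) → |πe α t x u - πe β t x u| ≤ L * |α - β|

/-- Edge indicators of a simple (undirected) graph. -/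
def IsEdgeWeights {N : ℕ} (ξ : Fin N → Fin N → ℝ) : Prop :=
  (∀ i j, ξ i j = 0 ∨ ξ i j = 1) ∧ ∀ i j, ξ i j = ξ j i

/-- Empirical neighborhood mean field 𝔾ⁱ = (1/N) Σ_j ξ_{ij} δ_{X^j}. -/
noncomputable def empNbhd [Fintype 𝒳] [DecidableEq 𝒳] {N : ℕ} (ξ : Fin N → Fin N → ℝ)
    (X : Fin N → 𝒳) (i : Fin N) : 𝒳 → ℝ :=
  fun x => (N : ℝ)⁻¹ * ∑ j, ξ i j * (if X j = x then 1 else 0)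

/-- The joint law of the N agents' states at time t: X^i_0 ∼ μ₀ i.i.d.,
U^i_t ∼ π^i_t(·|X^i_t), X^i_{t+1} ∼ P(·|X^i_t,U^i_t,𝔾^i_t) conditionally independently. -/
noncomputable def jointLaw [Fintype 𝒳] [DecidableEq 𝒳] [Fintype 𝒰] {N : ℕ}
    (P : 𝒳 → 𝒰 → (𝒳 → ℝ) → 𝒳 → ℝ) (μ0 : 𝒳 → ℝ) (ξ : Fin N → Fin N → ℝ)
    (πs : Fin N → ℕ → 𝒳 → 𝒰 → ℝ) : ℕ → (Fin N → 𝒳) → ℝ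
  | 0 => fun X => ∏ i, μ0 (X i)
  | (t+1) => fun Y => ∑ X : Fin N → 𝒳, jointLaw P μ0 ξ πs t X *
      ∏ i, ∑ u, πs i t (X i) u * P (X i) u (empNbhd ξ X i) (Y i)

/-- The objective J^N_i = E[Σ_{t<T} r(X^i_t,U^i_t,𝔾^i_t)] of agent i in the N-agent game. -/
noncomputable def JN [Fintype 𝒳] [DecidableEq 𝒳] [Fintype 𝒰] {N : ℕ} (T : ℕ)
    (r : 𝒳 → 𝒰 → (𝒳 → ℝ) → ℝ) (P : 𝒳 → 𝒰 → (𝒳 → ℝ) → 𝒳 → ℝ) (μ0 : 𝒳 → ℝ)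
    (ξ : Fin N → Fin N → ℝ) (πs : Fin N → ℕ → 𝒳 → 𝒰 → ℝ) (i : Fin N) : ℝ :=
  ∑ t ∈ Finset.range T, ∑ X : Fin N → 𝒳, jointLaw P μ0 ξ πs t X *
    ∑ u, πs i t (X i) u * r (X i) u (empNbhd ξ X i)

/-- Γ_N(𝛑) = (π^{1/N},…,π^{N/N}) (agent i : Fin N has graphon index (i+1)/N). -/
noncomputable def gammaN (πe : ℝ → ℕ → 𝒳 → 𝒰 → ℝ) (N : ℕ) : Fin N → ℕ → 𝒳 → 𝒰 → ℝ :=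
  fun i => πe ((((i : ℕ) : ℝ) + 1) / N)

/-- The step graphon W_N of a finite graph: W_N(x,y) = ξ_{⌈Nx⌉,⌈Ny⌉}. -/
noncomputable def stepGraphon {N : ℕ} (ξ : Fin N → Fin N → ℝ) : ℝ → ℝ → ℝ := fun a b =>
  ∑ i : Fin N, ∑ j : Fin N,
    (if ((i : ℕ) : ℝ) / N < a ∧ a ≤ (((i : ℕ) : ℝ) + 1) / N then 1 else 0) *
    (if ((j : ℕ) : ℝ) / N < b ∧ b ≤ (((j : ℕ) : ℝ) + 1) / N then 1 else 0) * ξ i j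

/-- Assumption (W): ‖W_N − W‖_{L∞→L1} → 0, i.e.
sup_{‖g‖∞ ≤ 1} ∫₀¹ |∫₀¹ (W_N(α,β) − W(α,β)) g(β) dβ| dα → 0. -/
def OpConvergesTo (WN : (N : ℕ) → ℝ → ℝ → ℝ) (W : ℝ → ℝ → ℝ) : Prop :=
  ∀ ε > (0:ℝ), ∃ N₀ : ℕ, ∀ N ≥ N₀, ∀ g : ℝ → ℝ, Measurable g → (∀ β, |g β| ≤ 1) →
    (∫ α in Set.Ioc (0:ℝ) 1, |∫ β in Set.Ioc (0:ℝ) 1, (WN N α β - W α β) * g β|) ≤ ε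

/-- ‖W_N − W‖_{L∞→L1} = O(1/√N). -/
def OpRateSqrt (WN : (N : ℕ) → ℝ → ℝ → ℝ) (W : ℝ → ℝ → ℝ) : Prop :=
  ∃ C : ℝ, ∀ N : ℕ, 1 ≤ N → ∀ g : ℝ → ℝ, Measurable g → (∀ β, |g β| ≤ 1) →
    (∫ α in Set.Ioc (0:ℝ) 1, |∫ β in Set.Ioc (0:ℝ) 1, (WN N α β - W α β) * g β|) ≤ C / Real.sqrt N

/-- 𝛍^N_t(f) = ∫₀¹ f(X^{⌈Nα⌉}, α) dα, the integral of f against the random empirical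
step measure ensemble. -/
noncomputable def empInt [Fintype 𝒳] {N : ℕ} (f : 𝒳 → ℝ → ℝ) (X : Fin N → 𝒳) : ℝ :=
  ∑ i : Fin N, ∫ α in Set.Ioc (((i : ℕ) : ℝ) / N) ((((i : ℕ) : ℝ) + 1) / N), f (X i) α

/-- 𝛍_t(f) = ∫₀¹ Σ_x f(x,α) μ^α_t(x) dα. -/
noncomputable def mfInt [Fintype 𝒳] (f : 𝒳 → ℝ → ℝ) (ν : ℝ → 𝒳 → ℝ) : ℝ :=
  ∫ α in Set.Ioc (0:ℝ) 1, ∑ x, f x α * ν α x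

/-- The representative α_m = (m+1)/M of the m-th equivalence class Ĩ_m = (m/M,(m+1)/M]. -/
noncomputable def rep (M : ℕ) (m : Fin M) : ℝ := (((m : ℕ) : ℝ) + 1) / M

/-- Discretized neighborhood mean field 𝔾̂^{α_m} = (1/M) Σ_n W(α_m,α_n) ν^{α_n}. -/
noncomputable def approxNbhd [Fintype 𝒳] {M : ℕ} (W : ℝ → ℝ → ℝ) (ν : Fin M → 𝒳 → ℝ)
    (m : Fin M) : 𝒳 → ℝ :=
  fun x => (M : ℝ)⁻¹ * ∑ n, W (rep M m) (rep M n) * ν n x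

/-- The approximate mean field μ̂ = Ψ̂(𝛑) of the M equivalence classes method. -/
noncomputable def approxMF [Fintype 𝒳] [Fintype 𝒰] {M : ℕ} (W : ℝ → ℝ → ℝ)
    (P : 𝒳 → 𝒰 → (𝒳 → ℝ) → 𝒳 → ℝ) (μ0 : 𝒳 → ℝ) (πm : Fin M → ℕ → 𝒳 → 𝒰 → ℝ) :
    ℕ → Fin M → 𝒳 → ℝ
  | 0 => fun _ => μ0
  | (t+1) => fun m x' => ∑ x, approxMF W P μ0 πm t m x *
      ∑ u, πm m t x u * P x u (approxNbhd W (approxMF W P μ0 πm t) m) x'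

/-- A solution (𝛑, 𝛍) of the M equivalence classes method: 𝛑 is determined by policies
π^{α_m} (one per class), each optimal for the generated approximate mean field 𝛍 = Ψ̂(𝛑). -/
def IsEqClassSolution [Fintype 𝒳] [Fintype 𝒰] (T : ℕ) {M : ℕ} (W : ℝ → ℝ → ℝ)
    (P : 𝒳 → 𝒰 → (𝒳 → ℝ) → 𝒳 → ℝ) (r : 𝒳 → 𝒰 → (𝒳 → ℝ) → ℝ) (μ0 : 𝒳 → ℝ)
    (πm : Fin M → ℕ → 𝒳 → 𝒰 → ℝ) : Prop :=
  (∀ m, IsPolicy (πm m)) ∧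
  ∀ m, ∀ π' : ℕ → 𝒳 → 𝒰 → ℝ, IsPolicy π' →
    Jmf T r P μ0 (fun t => approxNbhd W (approxMF W P μ0 πm t) m) π'
      ≤ Jmf T r P μ0 (fun t => approxNbhd W (approxMF W P μ0 πm t) m) (πm m)

/-- The optimal action value function Q with k steps to go from time t,
Q(t,x,u) = r(x,u,G_t) + Σ_{x'} P(x'|x,u,G_t) max_{u'} Q(t+1,x',u'). -/
noncomputable def Qfun [Fintype 𝒳] [Fintype 𝒰] [Nonempty 𝒰] (r : 𝒳 → 𝒰 → (𝒳 → ℝ) → ℝ)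
    (P : 𝒳 → 𝒰 → (𝒳 → ℝ) → 𝒳 → ℝ) (G : ℕ → 𝒳 → ℝ) : ℕ → ℕ → 𝒳 → 𝒰 → ℝ
  | 0 => fun _ _ _ => 0
  | (k+1) => fun t x u => r x u (G t) + ∑ x', P x u (G t) x' *
      Finset.univ.sup' Finset.univ_nonempty (fun u' => Qfun r P G k (t+1) x' u')

/-- The Boltzmann (softmax) policy Φ̂_η(𝛍) of the M equivalence classes method with
horizon T, temperature η and block mean field ν. -/
noncomputable def boltzmann [Fintype 𝒳] [Fintype 𝒰] [Nonempty 𝒰] (T : ℕ) (η : ℝ)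
    (r : 𝒳 → 𝒰 → (𝒳 → ℝ) → ℝ) (P : 𝒳 → 𝒰 → (𝒳 → ℝ) → 𝒳 → ℝ) (W : ℝ → ℝ → ℝ) {M : ℕ}
    (ν : ℕ → Fin M → 𝒳 → ℝ) : Fin M → ℕ → 𝒳 → 𝒰 → ℝ :=
  fun m t x u =>
    Real.exp (Qfun r P (fun s => approxNbhd W (ν s) m) (T - t) t x u / η) /
      ∑ u' : 𝒰, Real.exp (Qfun r P (fun s => approxNbhd W (ν s) m) (T - t) t x u' / η)

/-- One step 𝛍 ↦ Ψ̂(Φ̂_η(𝛍)) of the Boltzmann fixed point iteration. -/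
noncomputable def boltzIter [Fintype 𝒳] [Fintype 𝒰] [Nonempty 𝒰] (T : ℕ) (η : ℝ)
    (r : 𝒳 → 𝒰 → (𝒳 → ℝ) → ℝ) (P : 𝒳 → 𝒰 → (𝒳 → ℝ) → 𝒳 → ℝ) (W : ℝ → ℝ → ℝ) (μ0 : 𝒳 → ℝ)
    {M : ℕ} (ν : ℕ → Fin M → 𝒳 → ℝ) : ℕ → Fin M → 𝒳 → ℝ :=
  fun t => approxMF W P μ0 (boltzmann T η r P W ν) t


/-! ### Helper lemmas -/

lemma aux_l1_nonneg {𝒳 : Type*} [Fintype 𝒳] (a b : 𝒳 → ℝ) : 0 ≤ l1dist a b :=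
  Finset.sum_nonneg fun _ _ => abs_nonneg _

lemma aux_l1_comm {𝒳 : Type*} [Fintype 𝒳] (a b : 𝒳 → ℝ) : l1dist a b = l1dist b a :=
  Finset.sum_congr rfl fun _ _ => abs_sub_comm _ _

lemma aux_l1_le_two {𝒳 : Type*} [Fintype 𝒳] {a b : 𝒳 → ℝ} (ha : a ∈ subProb 𝒳)
    (hb : b ∈ subProb 𝒳) : l1dist a b ≤ 2 := by
  have h : l1dist a b ≤ ∑ x, (a x + b x) := by
    refine Finset.sum_le_sum fun x _ => ?_
    have h1 := ha.1 x
    have h2 := hb.1 x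
    rw [abs_le]
    constructor <;> linarith
  rw [Finset.sum_add_distrib] at h
  linarith [ha.2, hb.2]

lemma aux_simplex_subProb {𝒳 : Type*} [Fintype 𝒳] {a : 𝒳 → ℝ} (ha : a ∈ simplex 𝒳) :
    a ∈ subProb 𝒳 := ⟨ha.1, ha.2.le⟩

lemma aux_abs_le_l1 {𝒳 : Type*} [Fintype 𝒳] (a b : 𝒳 → ℝ) (x : 𝒳) :
    |a x - b x| ≤ l1dist a b :=
  Finset.single_le_sum (f := fun x => |a x - b x|) (fun _ _ => abs_nonneg _) (Finset.mem_univ x)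

/-- Mixtures of distributions are distributions. -/
lemma aux_mix_simplex {ι 𝒳 : Type*} [Fintype ι] [Fintype 𝒳] {a : ι → ℝ} {f : ι → 𝒳 → ℝ}
    (ha : a ∈ simplex ι) (hf : ∀ i, f i ∈ simplex 𝒳) :
    (fun x => ∑ i, a i * f i x) ∈ simplex 𝒳 := by
  refine ⟨fun x => Finset.sum_nonneg fun i _ => mul_nonneg (ha.1 i) ((hf i).1 x), ?_⟩
  rw [Finset.sum_comm]
  simp_rw [← Finset.mul_sum]
  rw [← ha.2]
  exact Finset.sum_congr rfl fun i _ => by rw [(hf i).2, mul_one]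

/-- Mixtures are stable in L¹. -/
lemma aux_mix_l1 {ι 𝒳 : Type*} [Fintype ι] [Fintype 𝒳] {a a' : ι → ℝ} {f f' : ι → 𝒳 → ℝ}
    {c : ℝ} (ha' : a' ∈ simplex ι) (hf : ∀ i, f i ∈ simplex 𝒳)
    (hc : ∀ i, l1dist (f i) (f' i) ≤ c) :
    l1dist (fun x => ∑ i, a i * f i x) (fun x => ∑ i, a' i * f' i x) ≤ l1dist a a' + c := by
  have h1 : l1dist (fun x => ∑ i, a i * f i x) (fun x => ∑ i, a' i * f' i x)
      ≤ ∑ x, ∑ i, (|a i - a' i| * f i x + a' i * |f i x - f' i x|) := by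
    refine Finset.sum_le_sum fun x _ => ?_
    rw [← Finset.sum_sub_distrib]
    refine (Finset.abs_sum_le_sum_abs _ _).trans (Finset.sum_le_sum fun i _ => ?_)
    have e : a i * f i x - a' i * f' i x
        = (a i - a' i) * f i x + a' i * (f i x - f' i x) := by ring
    rw [e]
    refine (abs_add_le _ _).trans ?_
    rw [abs_mul, abs_mul, abs_of_nonneg ((hf i).1 x), abs_of_nonneg (ha'.1 i)]
  refine h1.trans ?_
  rw [Finset.sum_comm]
  simp_rw [Finset.sum_add_distrib, ← Finset.mul_sum]
  refine add_le_add (Finset.sum_le_sum fun i _ => by rw [(hf i).2, mul_one]) ?_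
  calc ∑ i, a' i * ∑ x, |f i x - f' i x| ≤ ∑ i, a' i * c :=
        Finset.sum_le_sum fun i _ => mul_le_mul_of_nonneg_left (hc i) (ha'.1 i)
    _ = c := by rw [← Finset.sum_mul, ha'.2, one_mul]

lemma aux_nbhd_subProb {𝒳 : Type*} [Fintype 𝒳] {M : ℕ} (hM : 0 < M) {W : ℝ → ℝ → ℝ}
    (hW : IsGraphon W) {ν : Fin M → 𝒳 → ℝ} (hν : ∀ n, ν n ∈ simplex 𝒳) (m : Fin M) :
    approxNbhd W ν m ∈ subProb 𝒳 := by
  have hM' : (0:ℝ) < M := by exact_mod_cast hM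
  refine ⟨fun x => mul_nonneg (inv_nonneg.2 hM'.le)
    (Finset.sum_nonneg fun n _ => mul_nonneg (hW.2.2 _ _).1 ((hν n).1 x)), ?_⟩
  unfold approxNbhd
  rw [← Finset.mul_sum, Finset.sum_comm]
  have h : ∑ n : Fin M, ∑ x, W (rep M m) (rep M n) * ν n x ≤ ∑ n : Fin M, (1:ℝ) := by
    refine Finset.sum_le_sum fun n _ => ?_
    rw [← Finset.mul_sum, (hν n).2, mul_one]
    exact (hW.2.2 _ _).2
  simp only [Finset.sum_const, Finset.card_univ, Fintype.card_fin, nsmul_eq_mul, mul_one] at h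
  calc _ ≤ (M:ℝ)⁻¹ * M := mul_le_mul_of_nonneg_left h (inv_nonneg.2 hM'.le)
    _ = 1 := inv_mul_cancel₀ hM'.ne'

lemma aux_nbhd_l1 {𝒳 : Type*} [Fintype 𝒳] {M : ℕ} (hM : 0 < M) {W : ℝ → ℝ → ℝ}
    (hW : IsGraphon W) {ν ν' : Fin M → 𝒳 → ℝ} {δ : ℝ}
    (h : ∀ n, l1dist (ν n) (ν' n) ≤ δ) (m : Fin M) :
    l1dist (approxNbhd W ν m) (approxNbhd W ν' m) ≤ δ := by
  have hM' : (0:ℝ) < M := by exact_mod_cast hM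
  have h1 : l1dist (approxNbhd W ν m) (approxNbhd W ν' m)
      ≤ ∑ x, (M:ℝ)⁻¹ * ∑ n, |ν n x - ν' n x| := by
    refine Finset.sum_le_sum fun x _ => ?_
    unfold approxNbhd
    rw [← mul_sub, abs_mul, abs_of_nonneg (inv_nonneg.2 hM'.le), ← Finset.sum_sub_distrib]
    refine mul_le_mul_of_nonneg_left ?_ (inv_nonneg.2 hM'.le)
    refine (Finset.abs_sum_le_sum_abs _ _).trans (Finset.sum_le_sum fun n _ => ?_)
    rw [← mul_sub, abs_mul, abs_of_nonneg (hW.2.2 _ _).1]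
    exact mul_le_of_le_one_left (abs_nonneg _) (hW.2.2 _ _).2
  refine h1.trans ?_
  rw [← Finset.mul_sum, Finset.sum_comm]
  have h2 : ∑ n : Fin M, ∑ x, |ν n x - ν' n x| ≤ ∑ n : Fin M, δ :=
    Finset.sum_le_sum fun n _ => h n
  simp only [Finset.sum_const, Finset.card_univ, Fintype.card_fin, nsmul_eq_mul] at h2
  calc _ ≤ (M:ℝ)⁻¹ * (M * δ) := mul_le_mul_of_nonneg_left h2 (inv_nonneg.2 hM'.le)
    _ = δ := by field_simp

/-- Softmax is Lipschitz. -/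
lemma aux_softmax_one_sided {𝒰 : Type*} [Fintype 𝒰] [Nonempty 𝒰] {q q' : 𝒰 → ℝ} {ε : ℝ}
    (h : ∀ u, |q u - q' u| ≤ ε) (u : 𝒰) :
    Real.exp (q u) / ∑ v, Real.exp (q v) - Real.exp (q' u) / ∑ v, Real.exp (q' v) ≤ 2 * ε := by
  have hS : 0 < ∑ v, Real.exp (q v) :=
    Finset.sum_pos (fun v _ => Real.exp_pos _) Finset.univ_nonempty
  have hS' : 0 < ∑ v, Real.exp (q' v) :=
    Finset.sum_pos (fun v _ => Real.exp_pos _) Finset.univ_nonempty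
  have hε : 0 ≤ ε := (abs_nonneg _).trans (h u)
  have h1 : Real.exp (-ε) * Real.exp (q u) ≤ Real.exp (q' u) := by
    rw [← Real.exp_add]
    exact Real.exp_le_exp.2 (by have := (abs_le.1 (h u)).2; linarith)
  have h2 : Real.exp (-ε) * ∑ v, Real.exp (q' v) ≤ ∑ v, Real.exp (q v) := by
    rw [Finset.mul_sum]
    refine Finset.sum_le_sum fun v _ => ?_
    rw [← Real.exp_add]
    exact Real.exp_le_exp.2 (by have := (abs_le.1 (h v)).1; linarith)
  set p := Real.exp (q u) / ∑ v, Real.exp (q v) with hp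
  have hp0 : 0 ≤ p := by positivity
  have hp1 : p ≤ 1 := by
    rw [hp, div_le_one hS]
    exact Finset.single_le_sum (f := fun v => Real.exp (q v)) (fun _ _ => (Real.exp_pos _).le)
      (Finset.mem_univ u)
  have h3 : Real.exp (-(2 * ε)) * p ≤ Real.exp (q' u) / ∑ v, Real.exp (q' v) := by
    rw [le_div_iff₀ hS', hp]
    have e : Real.exp (-(2 * ε)) = Real.exp (-ε) * Real.exp (-ε) := by
      rw [← Real.exp_add]; congr 1; ring
    rw [e]
    calc _ = (Real.exp (-ε) * Real.exp (q u)) * ((Real.exp (-ε) * ∑ v, Real.exp (q' v))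
            / ∑ v, Real.exp (q v)) := by ring
      _ ≤ (Real.exp (-ε) * Real.exp (q u)) * 1 := by
          refine mul_le_mul_of_nonneg_left ?_ (by positivity)
          rw [div_le_one hS]; exact h2
      _ ≤ _ := by rw [mul_one]; exact h1
  have h4 : 1 - 2 * ε ≤ Real.exp (-(2 * ε)) := by
    have := Real.add_one_le_exp (-(2 * ε)); linarith
  have h5 : (1 - 2 * ε) * p ≤ Real.exp (-(2 * ε)) * p := mul_le_mul_of_nonneg_right h4 hp0
  nlinarith [mul_le_mul_of_nonneg_left hp1 hε]

lemma aux_softmax {𝒰 : Type*} [Fintype 𝒰] [Nonempty 𝒰] {q q' : 𝒰 → ℝ} {ε : ℝ}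
    (h : ∀ u, |q u - q' u| ≤ ε) (u : 𝒰) :
    |Real.exp (q u) / ∑ v, Real.exp (q v) - Real.exp (q' u) / ∑ v, Real.exp (q' v)|
      ≤ 2 * ε := by
  rw [abs_le]
  have h1 := aux_softmax_one_sided h u
  have h2 := aux_softmax_one_sided (q := q') (q' := q) (ε := ε)
    (fun v => by rw [abs_sub_comm]; exact h v) u
  constructor <;> linarith

lemma aux_sup_le {𝒰 : Type*} [Fintype 𝒰] [Nonempty 𝒰] {f g : 𝒰 → ℝ} {c : ℝ}
    (h : ∀ u, |f u - g u| ≤ c) :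
    |Finset.univ.sup' Finset.univ_nonempty f - Finset.univ.sup' Finset.univ_nonempty g| ≤ c := by
  have key : ∀ f g : 𝒰 → ℝ, (∀ u, |f u - g u| ≤ c) →
      Finset.univ.sup' Finset.univ_nonempty f
        ≤ Finset.univ.sup' Finset.univ_nonempty g + c := by
    intro f g h
    refine Finset.sup'_le _ _ fun u hu => ?_
    have h1 := Finset.le_sup' g hu
    have h2 := (abs_le.1 (h u)).2
    linarith
  have h1 := key f g h
  have h2 := key g f (fun u => by rw [abs_sub_comm]; exact h u)
  rw [abs_le]
  constructor <;> linarith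

lemma aux_sup_bound {𝒰 : Type*} [Fintype 𝒰] [Nonempty 𝒰] {f : 𝒰 → ℝ} {c : ℝ}
    (h : ∀ u, |f u| ≤ c) : |Finset.univ.sup' Finset.univ_nonempty f| ≤ c := by
  have := aux_sup_le (f := f) (g := fun _ => 0) (c := c) (by simpa using h)
  simpa using this

lemma aux_r_bound {𝒳 𝒰 : Type*} [Fintype 𝒳] [Fintype 𝒰]
    {r : 𝒳 → 𝒰 → (𝒳 → ℝ) → ℝ} {Lr : ℝ} (hrLip : RewardLipschitz r Lr) :
    ∃ R : ℝ, 0 ≤ R ∧ ∀ x u ν, ν ∈ subProb 𝒳 → |r x u ν| ≤ R := by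
  refine ⟨(∑ x, ∑ u, |r x u 0|) + |Lr| * 2, by positivity, fun x u ν hν => ?_⟩
  have h0 : (0 : 𝒳 → ℝ) ∈ subProb 𝒳 := ⟨fun _ => le_rfl, by simp⟩
  have h1 := hrLip x u ν 0 hν h0
  have h2 : Lr * l1dist ν 0 ≤ |Lr| * 2 :=
    mul_le_mul (le_abs_self _) (aux_l1_le_two hν h0) (aux_l1_nonneg _ _) (abs_nonneg _)
  have h3 : |r x u 0| ≤ ∑ u, |r x u 0| :=
    Finset.single_le_sum (f := fun u => |r x u 0|) (fun _ _ => abs_nonneg _) (Finset.mem_univ u)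
  have h4 : ∑ u, |r x u 0| ≤ ∑ x, ∑ u, |r x u 0| :=
    Finset.single_le_sum (f := fun x => ∑ u, |r x u 0|)
      (fun _ _ => Finset.sum_nonneg fun _ _ => abs_nonneg _) (Finset.mem_univ x)
  have h5 := abs_sub_abs_le_abs_sub (r x u ν) (r x u 0)
  linarith

lemma aux_Q_bound {𝒳 𝒰 : Type*} [Fintype 𝒳] [Fintype 𝒰] [Nonempty 𝒰]
    {P : 𝒳 → 𝒰 → (𝒳 → ℝ) → 𝒳 → ℝ} (hP : IsKernel P)
    {r : 𝒳 → 𝒰 → (𝒳 → ℝ) → ℝ} {Lr : ℝ} (hrLip : RewardLipschitz r Lr) (k : ℕ) :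
    ∃ B : ℝ, 0 ≤ B ∧ ∀ G : ℕ → 𝒳 → ℝ, (∀ s, G s ∈ subProb 𝒳) →
      ∀ t x u, |Qfun r P G k t x u| ≤ B := by
  obtain ⟨R, hR0, hR⟩ := aux_r_bound hrLip
  induction k with
  | zero => exact ⟨0, le_rfl, fun G _ t x u => by simp [Qfun]⟩
  | succ k ih =>
    obtain ⟨B, hB0, hB⟩ := ih
    refine ⟨R + B, by positivity, fun G hG t x u => ?_⟩
    simp only [Qfun]
    refine (abs_add_le _ _).trans (add_le_add (hR x u _ (hG t)) ?_)
    have hp := hP x u (G t) (hG t)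
    refine (Finset.abs_sum_le_sum_abs _ _).trans ?_
    calc _ ≤ ∑ x', P x u (G t) x' * B := by
          refine Finset.sum_le_sum fun x' _ => ?_
          rw [abs_mul, abs_of_nonneg (hp.1 x')]
          exact mul_le_mul_of_nonneg_left (aux_sup_bound fun u' => hB G hG _ _ _) (hp.1 x')
      _ = B := by rw [← Finset.sum_mul, hp.2, one_mul]

lemma aux_Q_lip {𝒳 𝒰 : Type*} [Fintype 𝒳] [Fintype 𝒰] [Nonempty 𝒰]
    {P : 𝒳 → 𝒰 → (𝒳 → ℝ) → 𝒳 → ℝ} (hP : IsKernel P)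
    {r : 𝒳 → 𝒰 → (𝒳 → ℝ) → ℝ} {Lr LP : ℝ} (hrLip : RewardLipschitz r Lr)
    (hPLip : KernelLipschitz P LP) (k : ℕ) :
    ∃ K : ℝ, 0 ≤ K ∧ ∀ G G' : ℕ → 𝒳 → ℝ, (∀ s, G s ∈ subProb 𝒳) → (∀ s, G' s ∈ subProb 𝒳) →
      ∀ δ : ℝ, 0 ≤ δ → ∀ t, (∀ s, s < t + k → l1dist (G s) (G' s) ≤ δ) →
      ∀ x u, |Qfun r P G k t x u - Qfun r P G' k t x u| ≤ K * δ := by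
  induction k with
  | zero => exact ⟨0, le_rfl, fun G G' _ _ δ _ t _ x u => by simp [Qfun]⟩
  | succ k ih =>
    obtain ⟨K, hK0, hK⟩ := ih
    obtain ⟨B, hB0, hB⟩ := aux_Q_bound hP hrLip k
    refine ⟨|Lr| + (|LP| * B + K), by positivity, fun G G' hG hG' δ hδ t hs x u => ?_⟩
    have hd : l1dist (G t) (G' t) ≤ δ := hs t (by omega)
    have ih' := hK G G' hG hG' δ hδ (t+1) (fun s h => hs s (by omega))
    simp only [Qfun]
    set V : 𝒳 → ℝ := fun x' =>
      Finset.univ.sup' Finset.univ_nonempty (fun u' => Qfun r P G k (t+1) x' u') with hV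
    set V' : 𝒳 → ℝ := fun x' =>
      Finset.univ.sup' Finset.univ_nonempty (fun u' => Qfun r P G' k (t+1) x' u') with hV'
    have hVV : ∀ x', |V x' - V' x'| ≤ K * δ := fun x' => aux_sup_le (ih' x')
    have hVB : ∀ x', |V x'| ≤ B := fun x' => aux_sup_bound (hB G hG _ _)
    have hr : |r x u (G t) - r x u (G' t)| ≤ |Lr| * δ :=
      (hrLip x u _ _ (hG t) (hG' t)).trans
        (mul_le_mul (le_abs_self _) hd (aux_l1_nonneg _ _) (abs_nonneg _))
    have hPl : l1dist (P x u (G t)) (P x u (G' t)) ≤ |LP| * δ :=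
      (hPLip x u _ _ (hG t) (hG' t)).trans
        (mul_le_mul (le_abs_self _) hd (aux_l1_nonneg _ _) (abs_nonneg _))
    have hp' := hP x u (G' t) (hG' t)
    have hsum : |∑ x', P x u (G t) x' * V x' - ∑ x', P x u (G' t) x' * V' x'|
        ≤ |LP| * δ * B + K * δ := by
      rw [← Finset.sum_sub_distrib]
      refine (Finset.abs_sum_le_sum_abs _ _).trans ?_
      calc _ ≤ ∑ x', (|P x u (G t) x' - P x u (G' t) x'| * B + P x u (G' t) x' * (K * δ)) := by
            refine Finset.sum_le_sum fun x' _ => ?_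
            have e : P x u (G t) x' * V x' - P x u (G' t) x' * V' x'
              = (P x u (G t) x' - P x u (G' t) x') * V x'
                + P x u (G' t) x' * (V x' - V' x') := by ring
            rw [e]
            refine (abs_add_le _ _).trans ?_
            rw [abs_mul, abs_mul, abs_of_nonneg (hp'.1 x')]
            exact add_le_add (mul_le_mul_of_nonneg_left (hVB x') (abs_nonneg _))
              (mul_le_mul_of_nonneg_left (hVV x') (hp'.1 x'))
        _ = l1dist (P x u (G t)) (P x u (G' t)) * B + K * δ := by
            rw [Finset.sum_add_distrib, ← Finset.sum_mul, ← Finset.sum_mul, hp'.2, one_mul]; rfl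
        _ ≤ _ := by gcongr
    calc |r x u (G t) + ∑ x', P x u (G t) x' * V x'
          - (r x u (G' t) + ∑ x', P x u (G' t) x' * V' x')|
        = |(r x u (G t) - r x u (G' t)) + (∑ x', P x u (G t) x' * V x'
          - ∑ x', P x u (G' t) x' * V' x')| := by congr 1; ring
      _ ≤ |Lr| * δ + (|LP| * δ * B + K * δ) := (abs_add_le _ _).trans (add_le_add hr hsum)
      _ = _ := by ring

lemma aux_MF_simplex {𝒳 𝒰 : Type*} [Fintype 𝒳] [Fintype 𝒰] {M : ℕ} (hM : 0 < M)
    {W : ℝ → ℝ → ℝ} (hW : IsGraphon W) {P : 𝒳 → 𝒰 → (𝒳 → ℝ) → 𝒳 → ℝ} (hP : IsKernel P)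
    {μ0 : 𝒳 → ℝ} (hμ0 : μ0 ∈ simplex 𝒳) {π : Fin M → ℕ → 𝒳 → 𝒰 → ℝ}
    (hπ : ∀ m, IsPolicy (π m)) (t : ℕ) : ∀ m, approxMF W P μ0 π t m ∈ simplex 𝒳 := by
  induction t with
  | zero => exact fun _ => hμ0
  | succ t ih =>
    intro m
    exact aux_mix_simplex (ih m) fun x => aux_mix_simplex (f := fun u =>
      P x u (approxNbhd W (approxMF W P μ0 π t) m)) (hπ m t x)
      fun u => hP _ _ _ (aux_nbhd_subProb hM hW ih m)

lemma aux_MF_lip {𝒳 𝒰 : Type*} [Fintype 𝒳] [Fintype 𝒰] {M : ℕ} (hM : 0 < M)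
    {W : ℝ → ℝ → ℝ} (hW : IsGraphon W) {P : 𝒳 → 𝒰 → (𝒳 → ℝ) → 𝒳 → ℝ} (hP : IsKernel P)
    {LP : ℝ} (hPLip : KernelLipschitz P LP) {μ0 : 𝒳 → ℝ} (hμ0 : μ0 ∈ simplex 𝒳) (t : ℕ) :
    ∃ C : ℝ, 0 ≤ C ∧ ∀ π π' : Fin M → ℕ → 𝒳 → 𝒰 → ℝ,
      (∀ m, IsPolicy (π m)) → (∀ m, IsPolicy (π' m)) → ∀ ε : ℝ, 0 ≤ ε →
      (∀ m t x u, |π m t x u - π' m t x u| ≤ ε) →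
      ∀ m, l1dist (approxMF W P μ0 π t m) (approxMF W P μ0 π' t m) ≤ C * ε := by
  induction t with
  | zero => exact ⟨0, le_rfl, fun π π' _ _ ε _ _ m => by simp [approxMF, l1dist]⟩
  | succ t ih =>
    obtain ⟨C, hC0, hC⟩ := ih
    refine ⟨C + (Fintype.card 𝒰 + |LP| * C), by positivity,
      fun π π' hπ hπ' ε hε hd m => ?_⟩
    have ih' := hC π π' hπ hπ' ε hε hd
    have hs := aux_MF_simplex hM hW hP hμ0 hπ t
    have hs' := aux_MF_simplex hM hW hP hμ0 hπ' t
    have hG := aux_nbhd_subProb hM hW hs m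
    have hG' := aux_nbhd_subProb hM hW hs' m
    have hGG := aux_nbhd_l1 hM hW ih' m
    have hu : ∀ x, l1dist (π m t x) (π' m t x) ≤ Fintype.card 𝒰 * ε := fun x => by
      refine (Finset.sum_le_sum fun u _ => hd m t x u).trans ?_
      simp
    have hPP : ∀ x u, l1dist (P x u (approxNbhd W (approxMF W P μ0 π t) m))
        (P x u (approxNbhd W (approxMF W P μ0 π' t) m)) ≤ |LP| * (C * ε) := fun x u =>
      (hPLip x u _ _ hG hG').trans
        (mul_le_mul (le_abs_self _) hGG (aux_l1_nonneg _ _) (abs_nonneg _))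
    have h1 : l1dist (approxMF W P μ0 π (t+1) m) (approxMF W P μ0 π' (t+1) m)
        ≤ l1dist (approxMF W P μ0 π t m) (approxMF W P μ0 π' t m)
          + (Fintype.card 𝒰 * ε + |LP| * (C * ε)) := by
      refine aux_mix_l1 (hs' m) (fun x => ?_) (fun x => ?_)
      · exact aux_mix_simplex (f := fun u =>
          P x u (approxNbhd W (approxMF W P μ0 π t) m)) (hπ m t x) fun u => hP _ _ _ hG
      · refine (aux_mix_l1 (f := fun u => P x u (approxNbhd W (approxMF W P μ0 π t) m))
          (f' := fun u => P x u (approxNbhd W (approxMF W P μ0 π' t) m))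
          (hπ' m t x) (fun u => hP _ _ _ hG) (hPP x)).trans ?_
        exact add_le_add (hu x) le_rfl
    calc _ ≤ C * ε + (Fintype.card 𝒰 * ε + |LP| * (C * ε)) :=
          h1.trans (add_le_add (ih' m) le_rfl)
      _ = _ := by ring

lemma aux_boltz_policy {𝒳 𝒰 : Type*} [Fintype 𝒳] [Fintype 𝒰] [Nonempty 𝒰] (T : ℕ) (η : ℝ)
    (r : 𝒳 → 𝒰 → (𝒳 → ℝ) → ℝ) (P : 𝒳 → 𝒰 → (𝒳 → ℝ) → 𝒳 → ℝ) (W : ℝ → ℝ → ℝ) {M : ℕ}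
    (ν : ℕ → Fin M → 𝒳 → ℝ) (m : Fin M) : IsPolicy (boltzmann T η r P W ν m) := by
  intro t x
  have hS : 0 < ∑ u' : 𝒰,
      Real.exp (Qfun r P (fun s => approxNbhd W (ν s) m) (T - t) t x u' / η) :=
    Finset.sum_pos (fun v _ => Real.exp_pos _) Finset.univ_nonempty
  refine ⟨fun u => div_nonneg (Real.exp_pos _).le hS.le, ?_⟩
  unfold boltzmann
  exact (Finset.sum_div _ _ _).symm.trans (div_self (ne_of_gt hS))

/-- The Boltzmann iteration is Lipschitz with constant `C t / η`. -/
lemma aux_iter_lip {𝒳 𝒰 : Type*} [Fintype 𝒳] [Fintype 𝒰] [Nonempty 𝒰] (T : ℕ)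
    {M : ℕ} (hM : 0 < M)
    {W : ℝ → ℝ → ℝ} (hW : IsGraphon W) {P : 𝒳 → 𝒰 → (𝒳 → ℝ) → 𝒳 → ℝ} (hP : IsKernel P)
    {r : 𝒳 → 𝒰 → (𝒳 → ℝ) → ℝ} {Lr LP : ℝ} (hrLip : RewardLipschitz r Lr)
    (hPLip : KernelLipschitz P LP) {μ0 : 𝒳 → ℝ} (hμ0 : μ0 ∈ simplex 𝒳) :
    ∃ C : ℕ → ℝ, (∀ t, 0 ≤ C t) ∧ ∀ η : ℝ, 0 < η → ∀ ν ν' : ℕ → Fin M → 𝒳 → ℝ,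
      (∀ t m, ν t m ∈ simplex 𝒳) → (∀ t m, ν' t m ∈ simplex 𝒳) → ∀ δ : ℝ, 0 ≤ δ →
      (∀ s < T, ∀ m, l1dist (ν s m) (ν' s m) ≤ δ) →
      ∀ t m, l1dist (boltzIter T η r P W μ0 ν t m) (boltzIter T η r P W μ0 ν' t m)
        ≤ C t / η * δ := by
  choose K hK0 hK using fun k => aux_Q_lip hP hrLip hPLip k
  choose C hC0 hC using fun t => aux_MF_lip (M := M) hM hW hP hPLip hμ0 t
  set KK : ℝ := ∑ k ∈ Finset.range (T+1), K k with hKK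
  have hKK0 : 0 ≤ KK := Finset.sum_nonneg fun k _ => hK0 k
  refine ⟨fun t => C t * (2 * KK), fun t => mul_nonneg (hC0 t) (by positivity),
    fun η hη ν ν' hν hν' δ hδ hd t m => ?_⟩
  have hpol : ∀ m t x u, |boltzmann T η r P W ν m t x u - boltzmann T η r P W ν' m t x u|
      ≤ 2 * (KK * δ / η) := by
    intro m t x u
    refine aux_softmax (q := fun u => Qfun r P (fun s => approxNbhd W (ν s) m) (T - t) t x u / η)
      (q' := fun u => Qfun r P (fun s => approxNbhd W (ν' s) m) (T - t) t x u / η)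
      (fun v => ?_) u
    rw [← sub_div, abs_div, abs_of_pos hη]
    refine div_le_div_of_nonneg_right ?_ hη.le
    have hle : K (T - t) ≤ KK :=
      Finset.single_le_sum (f := K) (fun k _ => hK0 k) (Finset.mem_range.2 (by omega))
    refine le_trans ?_ (mul_le_mul_of_nonneg_right hle hδ)
    rcases le_or_gt T t with h | h
    · have h0 : T - t = 0 := by omega
      rw [h0]
      simpa [Qfun] using mul_nonneg (hK0 0) hδ
    · exact hK (T - t) _ _ (fun s => aux_nbhd_subProb hM hW (hν s) m)
        (fun s => aux_nbhd_subProb hM hW (hν' s) m) δ hδ t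
        (fun s hs => aux_nbhd_l1 hM hW (hd s (by omega)) m) x v
  have := hC t _ _ (aux_boltz_policy T η r P W ν) (aux_boltz_policy T η r P W ν')
    (2 * (KK * δ / η)) (by positivity) hpol m
  refine this.trans (le_of_eq ?_)
  ring

/-- under Assumptions (W) and (Lip), the M equivalence classes algorithm
with Boltzmann (softmax) policies converges for all sufficiently high temperatures η > 0:
there exists η₀ > 0 such that for every η > η₀, the iteration 𝛍^{n+1} = Ψ̂(Φ̂_η(𝛍^n))
converges to a fixed point. -/
theorem boltzmann_iteration_converges
    {𝒳 𝒰 : Type*} [Fintype 𝒳] [Nonempty 𝒳] [Fintype 𝒰] [Nonempty 𝒰]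
    (T : ℕ) (μ0 : 𝒳 → ℝ) (hμ0 : μ0 ∈ simplex 𝒳)
    (P : 𝒳 → 𝒰 → (𝒳 → ℝ) → 𝒳 → ℝ) (hP : IsKernel P)
    (r : 𝒳 → 𝒰 → (𝒳 → ℝ) → ℝ)
    (Lr LP LW : ℝ) (hrLip : RewardLipschitz r Lr) (hPLip : KernelLipschitz P LP)
    (W : ℝ → ℝ → ℝ) (hW : IsGraphon W) (hWLip : GraphonLipschitz W LW)
    (ξ : (N : ℕ) → Fin N → Fin N → ℝ) (hξ : ∀ N, IsEdgeWeights (ξ N))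
    (hWconv : OpConvergesTo (fun N => stepGraphon (ξ N)) W)
    (M : ℕ) (hM : 0 < M) :
    ∃ η₀ : ℝ, 0 < η₀ ∧ ∀ η > η₀,
      ∀ ν0 : ℕ → Fin M → 𝒳 → ℝ, (∀ t m, ν0 t m ∈ simplex 𝒳) →
        ∃ νs : ℕ → Fin M → 𝒳 → ℝ,
          boltzIter T η r P W μ0 νs = νs ∧
          ∀ (t : ℕ) (m : Fin M) (x : 𝒳),
            Filter.Tendsto (fun n => (fun ν => boltzIter T η r P W μ0 ν)^[n] ν0 t m x)
              Filter.atTop (nhds (νs t m x)) := by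
  classical
  obtain ⟨C, hC0, hC⟩ := aux_iter_lip (r := r) T hM hW hP hrLip hPLip hμ0
  set S : ℝ := ∑ t ∈ Finset.range T, C t with hS
  have hS0 : 0 ≤ S := Finset.sum_nonneg fun t _ => hC0 t
  refine ⟨2 * S + 1, by positivity, fun η hη ν0 hν0 => ?_⟩
  have hη0 : 0 < η := by linarith
  have hCη : ∀ t < T, C t / η ≤ 1 / 2 := by
    intro t ht
    rw [div_le_iff₀ hη0]
    have : C t ≤ S := Finset.single_le_sum (f := C) (fun k _ => hC0 k) (Finset.mem_range.2 ht)
    linarith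
  set F : (ℕ → Fin M → 𝒳 → ℝ) → (ℕ → Fin M → 𝒳 → ℝ) :=
    fun ν => boltzIter T η r P W μ0 ν with hF
  have hFs : ∀ ν t m, F ν t m ∈ simplex 𝒳 := fun ν t m =>
    aux_MF_simplex hM hW hP hμ0 (aux_boltz_policy T η r P W ν) t m
  have hns : ∀ n t m, F^[n] ν0 t m ∈ simplex 𝒳 := by
    intro n t m
    cases n with
    | zero => exact hν0 t m
    | succ n => rw [Function.iterate_succ_apply']; exact hFs _ _ _
  -- successive iterates contract on the times before the horizon
  have hstep : ∀ n, ∀ s < T, ∀ m,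
      l1dist (F^[n] ν0 s m) (F^[n+1] ν0 s m) ≤ 2 * (1/2 : ℝ)^n := by
    intro n
    induction n with
    | zero =>
      intro s _ m
      simpa using aux_l1_le_two (aux_simplex_subProb (hns 0 s m)) (aux_simplex_subProb (hns 1 s m))
    | succ n ih =>
      intro s hs m
      have h := hC η hη0 _ _ (hns n) (hns (n+1)) _ (by positivity) ih s m
      rw [Function.iterate_succ_apply' F n, Function.iterate_succ_apply' F (n+1)]
      refine h.trans ?_
      calc _ ≤ (1/2 : ℝ) * (2 * (1/2 : ℝ)^n) :=
            mul_le_mul_of_nonneg_right (hCη s hs) (by positivity)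
        _ = _ := by ring
  have hcauchy : ∀ t m x, CauchySeq fun n => F^[n+1] ν0 t m x := by
    intro t m x
    refine cauchySeq_of_le_geometric (1/2 : ℝ) (C t / η * 2) (by norm_num) fun n => ?_
    rw [Real.dist_eq]
    refine (aux_abs_le_l1 _ _ x).trans ?_
    have h := hC η hη0 _ _ (hns n) (hns (n+1)) _ (by positivity) (hstep n) t m
    rw [Function.iterate_succ_apply' F n, Function.iterate_succ_apply' F (n+1)]
    refine h.trans (le_of_eq ?_)
    ring
  choose νs hνs using fun t m x => cauchySeq_tendsto_of_complete (hcauchy t m x)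
  have hlim : ∀ t m x, Filter.Tendsto (fun n => F^[n] ν0 t m x) Filter.atTop
      (nhds (νs t m x)) := fun t m x =>
    (Filter.tendsto_add_atTop_iff_nat (f := fun n => F^[n] ν0 t m x) 1).1 (hνs t m x)
  have hsimp : ∀ t m, νs t m ∈ simplex 𝒳 := by
    intro t m
    refine ⟨fun x => ge_of_tendsto' (hlim t m x) fun n => (hns n t m).1 x, ?_⟩
    refine tendsto_nhds_unique (tendsto_finsetSum _ fun x _ => hlim t m x) ?_
    simp only [(hns _ t m).2]
    exact tendsto_const_nhds
  refine ⟨νs, ?_, hlim⟩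
  -- distance of the iterates to the limit, over the times before the horizon
  set D : ℕ → ℝ := fun n =>
    ∑ s ∈ Finset.range T, ∑ m, l1dist (νs s m) (F^[n] ν0 s m) with hD
  have hD0 : ∀ n, 0 ≤ D n := fun n =>
    Finset.sum_nonneg fun s _ => Finset.sum_nonneg fun m _ => aux_l1_nonneg _ _
  have hDlim : Filter.Tendsto D Filter.atTop (nhds 0) := by
    have : Filter.Tendsto D Filter.atTop
        (nhds (∑ s ∈ Finset.range T, ∑ m : Fin M, ∑ x, |νs s m x - νs s m x|)) :=
      tendsto_finsetSum _ fun s _ => tendsto_finsetSum _ fun m _ =>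
        tendsto_finsetSum _ fun x _ => (tendsto_const_nhds.sub (hlim s m x)).abs
    simpa using this
  have hDle : ∀ n, ∀ s < T, ∀ m, l1dist (νs s m) (F^[n] ν0 s m) ≤ D n := by
    intro n s hs m
    have h1 : l1dist (νs s m) (F^[n] ν0 s m) ≤ ∑ m, l1dist (νs s m) (F^[n] ν0 s m) :=
      Finset.single_le_sum (f := fun m => l1dist (νs s m) (F^[n] ν0 s m))
        (fun _ _ => aux_l1_nonneg _ _) (Finset.mem_univ m)
    refine h1.trans ?_
    exact Finset.single_le_sum (f := fun s => ∑ m, l1dist (νs s m) (F^[n] ν0 s m))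
      (fun _ _ => Finset.sum_nonneg fun _ _ => aux_l1_nonneg _ _) (Finset.mem_range.2 hs)
  funext t m x
  have hb : ∀ n, |F νs t m x - F^[n+1] ν0 t m x| ≤ C t / η * D n := by
    intro n
    refine (aux_abs_le_l1 _ _ x).trans ?_
    rw [Function.iterate_succ_apply' F n]
    exact hC η hη0 _ _ hsimp (hns n) _ (hD0 n) (hDle n) t m
  have hz : Filter.Tendsto (fun n => C t / η * D n) Filter.atTop (nhds 0) := by
    simpa using hDlim.const_mul (C t / η)
  have hl : Filter.Tendsto (fun n => |F νs t m x - F^[n+1] ν0 t m x|) Filter.atTop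
      (nhds |F νs t m x - νs t m x|) :=
    (tendsto_const_nhds.sub (hνs t m x)).abs
  have h0 : |F νs t m x - νs t m x| ≤ 0 := le_of_tendsto_of_tendsto' hl hz hb
  exact sub_eq_zero.1 (abs_nonpos_iff.1 h0)

end GMFG
end

section
/- Under Assumptions (W) and (Lip), let (𝛑, 𝛍) be a solution of the M equivalence classes method, i.e. 𝛑 = Φ̂(𝛍) is block-constant with π^α = π^{α_m} optimal for J^𝛍_{α_m} on Ĩ_m, and 𝛍 = Ψ̂(𝛑). Then for any ε, p > 0 there exist M ∈ ℕ and N' ∈ ℕ such that for all N > N', the N-agent policy tuple (π¹,…,π^N) = Γ_N(𝛑) is an (ε,p)-Markov–Nash equilibrium of the N-agent graph game. -/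
open MeasureTheory Filter
open scoped BigOperators

namespace GMFG

variable {𝒳 𝒰 : Type*}

section Aux

/-- Finite expectation. -/
noncomputable def EE {Ω : Type*} [Fintype Ω] (q f : Ω → ℝ) : ℝ := ∑ w, q w * f w

variable {Ω : Type*} [Fintype Ω]

lemma EE_add (q f g : Ω → ℝ) : EE q (fun w => f w + g w) = EE q f + EE q g := by
  simp [EE, mul_add, Finset.sum_add_distrib]

lemma EE_sub (q f g : Ω → ℝ) : EE q (fun w => f w - g w) = EE q f - EE q g := by
  simp [EE, mul_sub, Finset.sum_sub_distrib]

lemma EE_mul (q f : Ω → ℝ) (c : ℝ) : EE q (fun w => c * f w) = c * EE q f := by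
  simp only [EE, Finset.mul_sum]
  exact Finset.sum_congr rfl fun _ _ => by ring

lemma EE_const {q : Ω → ℝ} (hq : q ∈ simplex Ω) (c : ℝ) : EE q (fun _ => c) = c := by
  simp [EE, ← Finset.sum_mul, hq.2]

lemma EE_mono {q : Ω → ℝ} (hq : q ∈ simplex Ω) {f g : Ω → ℝ} (h : ∀ w, f w ≤ g w) :
    EE q f ≤ EE q g :=
  Finset.sum_le_sum fun w _ => mul_le_mul_of_nonneg_left (h w) (hq.1 w)

lemma EE_abs {q : Ω → ℝ} (hq : q ∈ simplex Ω) (f : Ω → ℝ) :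
    |EE q f| ≤ EE q (fun w => |f w|) := by
  refine (Finset.abs_sum_le_sum_abs _ _).trans (le_of_eq ?_)
  exact Finset.sum_congr rfl fun w _ => by rw [abs_mul, abs_of_nonneg (hq.1 w)]

lemma EE_abs_le {q : Ω → ℝ} (hq : q ∈ simplex Ω) {f : Ω → ℝ} {c : ℝ} (h : ∀ w, |f w| ≤ c) :
    |EE q f| ≤ c :=
  (EE_abs hq f).trans ((EE_mono hq h).trans (EE_const hq c).le)

lemma EE_sum {ι : Type*} (s : Finset ι) (q : Ω → ℝ) (f : ι → Ω → ℝ) :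
    EE q (fun w => ∑ i ∈ s, f i w) = ∑ i ∈ s, EE q (f i) := by
  simp only [EE, Finset.mul_sum]
  exact Finset.sum_comm

lemma EE_l1 (q q' f : Ω → ℝ) (h : ∀ w, |f w| ≤ 1) : |EE q f - EE q' f| ≤ l1dist q q' := by
  simp only [EE, l1dist, ← Finset.sum_sub_distrib, ← sub_mul]
  refine (Finset.abs_sum_le_sum_abs _ _).trans (Finset.sum_le_sum fun w _ => ?_)
  rw [abs_mul]
  exact mul_le_of_le_one_right (abs_nonneg _) (h w)

/-- Product law. -/
noncomputable def prodLaw {𝒳 : Type*} {N : ℕ} (q : Fin N → 𝒳 → ℝ) : (Fin N → 𝒳) → ℝ :=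
  fun Y => ∏ i, q i (Y i)

variable [Fintype 𝒳] [Fintype 𝒰] {N : ℕ}

lemma sum_prod (f : Fin N → 𝒳 → ℝ) :
    ∑ Y : Fin N → 𝒳, ∏ i, f i (Y i) = ∏ i, ∑ x, f i x := by
  classical
  rw [Finset.prod_univ_sum]
  simp [Fintype.piFinset_univ]

lemma prodLaw_mem {q : Fin N → 𝒳 → ℝ} (hq : ∀ i, q i ∈ simplex 𝒳) :
    prodLaw q ∈ simplex (Fin N → 𝒳) := by
  refine ⟨fun Y => Finset.prod_nonneg fun i _ => (hq i).1 _, ?_⟩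
  simp only [prodLaw, sum_prod]
  exact Finset.prod_eq_one fun i _ => (hq i).2

lemma EE_prod_one {q : Fin N → 𝒳 → ℝ} (hq : ∀ i, q i ∈ simplex 𝒳) (j : Fin N) (g : 𝒳 → ℝ) :
    EE (prodLaw q) (fun Y => g (Y j)) = EE (q j) g := by
  classical
  have h : ∀ Y : Fin N → 𝒳, prodLaw q Y * g (Y j) =
      ∏ i, (q i (Y i) * (if i = j then g (Y i) else 1)) := by
    intro Y
    rw [Finset.prod_mul_distrib]
    simp [prodLaw]
  simp only [EE, h]
  rw [sum_prod (fun i y => q i y * (if i = j then g y else 1)),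
    Finset.prod_eq_single j]
  · simp
  · intro b _ hb
    simp [hb, (hq b).2]
  · simp

lemma EE_prod_two {q : Fin N → 𝒳 → ℝ} {j k : Fin N} (hjk : j ≠ k)
    (g g' : 𝒳 → ℝ) (h0 : EE (q j) g = 0) :
    EE (prodLaw q) (fun Y => g (Y j) * g' (Y k)) = 0 := by
  classical
  have h : ∀ Y : Fin N → 𝒳, prodLaw q Y * (g (Y j) * g' (Y k)) =
      ∏ i, (q i (Y i) * ((if i = j then g (Y i) else 1) * (if i = k then g' (Y i) else 1))) := by
    intro Y
    rw [Finset.prod_mul_distrib, Finset.prod_mul_distrib]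
    simp [prodLaw]
  simp only [EE, h]
  rw [sum_prod (fun i y => q i y * ((if i = j then g y else 1) * (if i = k then g' y else 1)))]
  apply Finset.prod_eq_zero (Finset.mem_univ j)
  simpa [hjk, EE] using h0

lemma EE_sq {q : Fin N → 𝒳 → ℝ} (hq : ∀ i, q i ∈ simplex 𝒳) (f : Fin N → 𝒳 → ℝ)
    (h0 : ∀ j, EE (q j) (f j) = 0) :
    EE (prodLaw q) (fun Y => (∑ j, f j (Y j)) ^ 2) = ∑ j, EE (q j) (fun y => f j y ^ 2) := by
  simp only [sq, Finset.sum_mul_sum]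
  rw [EE_sum]
  refine Finset.sum_congr rfl fun j _ => ?_
  rw [EE_sum, Finset.sum_eq_single j]
  · exact EE_prod_one hq j (fun y => f j y * f j y)
  · intro k _ hk
    exact EE_prod_two hk.symm _ _ (h0 j)
  · simp

lemma EE_var_le {q : 𝒳 → ℝ} (hq : q ∈ simplex 𝒳) {f : 𝒳 → ℝ} (hf : ∀ y, |f y| ≤ 1) :
    EE q (fun y => (f y - EE q f) ^ 2) ≤ 1 := by
  have h : (fun y => (f y - EE q f) ^ 2) =
      fun y => (f y ^ 2 + (EE q f)^2) - (2 * EE q f) * f y := by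
    funext y; ring
  rw [h, EE_sub, EE_add, EE_const hq, EE_mul]
  have : EE q (fun y => f y ^ 2) ≤ 1 := by
    refine (EE_mono hq (g := fun _ => 1) fun y => ?_).trans (EE_const hq 1).le
    exact (sq_le_one_iff_abs_le_one _).2 (hf y)
  nlinarith [sq_nonneg (EE q f)]

lemma EE_lln (hN : 0 < N) {q : Fin N → 𝒳 → ℝ} (hq : ∀ i, q i ∈ simplex 𝒳)
    {f : Fin N → 𝒳 → ℝ} (hf : ∀ j y, |f j y| ≤ 1) :
    EE (prodLaw q) (fun Y => |(N:ℝ)⁻¹ * ∑ j, (f j (Y j) - EE (q j) (f j))|)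
      ≤ (Real.sqrt N)⁻¹ := by
  have hs : 0 < Real.sqrt N := Real.sqrt_pos.2 (by exact_mod_cast hN)
  have hs2 : Real.sqrt N * Real.sqrt N = N := Real.mul_self_sqrt (by positivity)
  have h1 : EE (prodLaw q) (fun Y => (∑ j, (f j (Y j) - EE (q j) (f j))) ^ 2) ≤ N := by
    rw [EE_sq hq (fun j y => f j y - EE (q j) (f j))
      (fun j => by rw [EE_sub, EE_const (hq j), sub_self])]
    refine (Finset.sum_le_sum fun j _ => EE_var_le (hq j) (hf j)).trans ?_
    simp
  have h2 : EE (prodLaw q) (fun Y => |(N:ℝ)⁻¹ * ∑ j, (f j (Y j) - EE (q j) (f j))|) ≤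
      EE (prodLaw q) (fun Y => (N:ℝ)⁻¹ * ((2 * Real.sqrt N)⁻¹ *
        (∑ j, (f j (Y j) - EE (q j) (f j))) ^ 2 + Real.sqrt N / 2)) := by
    refine EE_mono (prodLaw_mem hq) fun Y => ?_
    rw [abs_mul, abs_of_pos (by positivity : (0:ℝ) < (N:ℝ)⁻¹)]
    refine mul_le_mul_of_nonneg_left ?_ (by positivity)
    generalize (∑ j, (f j (Y j) - EE (q j) (f j))) = z
    have : (2 * Real.sqrt N)⁻¹ * z ^ 2 + Real.sqrt N / 2 - |z| =
        (2 * Real.sqrt N)⁻¹ * (|z| - Real.sqrt N) ^ 2 := by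
      rw [← sq_abs z]; field_simp; ring
    have h3 : 0 ≤ (2 * Real.sqrt N)⁻¹ * (|z| - Real.sqrt N) ^ 2 := by positivity
    linarith
  refine h2.trans ?_
  rw [EE_mul, EE_add, EE_mul, EE_const (prodLaw_mem hq)]
  have h4 : (2 * Real.sqrt N)⁻¹ * EE (prodLaw q)
      (fun Y => (∑ j, (f j (Y j) - EE (q j) (f j))) ^ 2) ≤ Real.sqrt N / 2 := by
    refine (mul_le_mul_of_nonneg_left h1 (by positivity)).trans (le_of_eq ?_)
    rw [inv_mul_eq_div, div_eq_div_iff (by positivity) two_ne_zero]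
    linarith
  calc _ ≤ (N:ℝ)⁻¹ * (Real.sqrt N / 2 + Real.sqrt N / 2) := by gcongr
    _ = (Real.sqrt N)⁻¹ := by
      have hN' : (N:ℝ) ≠ 0 := by positivity
      rw [add_halves, inv_mul_eq_div, ← one_div, div_eq_div_iff hN' hs.ne']
      linarith

/-- One-agent transition law. -/
noncomputable def qk (P : 𝒳 → 𝒰 → (𝒳 → ℝ) → 𝒳 → ℝ) (π : ℕ → 𝒳 → 𝒰 → ℝ) (t : ℕ)
    (x : 𝒳) (ν : 𝒳 → ℝ) : 𝒳 → ℝ := fun y => ∑ u, π t x u * P x u ν y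

lemma qk_mem {P : 𝒳 → 𝒰 → (𝒳 → ℝ) → 𝒳 → ℝ} (hP : IsKernel P) {π : ℕ → 𝒳 → 𝒰 → ℝ}
    (hπ : IsPolicy π) (t : ℕ) (x : 𝒳) {ν : 𝒳 → ℝ} (hν : ν ∈ subProb 𝒳) :
    qk P π t x ν ∈ simplex 𝒳 := by
  refine ⟨fun y => Finset.sum_nonneg fun u _ => mul_nonneg ((hπ t x).1 u) ((hP x u ν hν).1 y), ?_⟩
  simp only [qk]
  rw [Finset.sum_comm]
  simp only [← Finset.mul_sum, (hP x _ ν hν).2, mul_one, (hπ t x).2]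

lemma qk_lip {P : 𝒳 → 𝒰 → (𝒳 → ℝ) → 𝒳 → ℝ} {LP : ℝ} (hL : KernelLipschitz P LP)
    {π : ℕ → 𝒳 → 𝒰 → ℝ} (hπ : IsPolicy π) (t : ℕ) (x : 𝒳) {ν ν' : 𝒳 → ℝ}
    (hν : ν ∈ subProb 𝒳) (hν' : ν' ∈ subProb 𝒳) :
    l1dist (qk P π t x ν) (qk P π t x ν') ≤ LP * l1dist ν ν' := by
  have : l1dist (qk P π t x ν) (qk P π t x ν') ≤
      ∑ u, π t x u * l1dist (P x u ν) (P x u ν') := by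
    simp only [l1dist, qk, Finset.mul_sum]
    rw [Finset.sum_comm]
    refine Finset.sum_le_sum fun y _ => ?_
    rw [← Finset.sum_sub_distrib]
    refine (Finset.abs_sum_le_sum_abs _ _).trans (Finset.sum_le_sum fun u _ => ?_)
    rw [← mul_sub, abs_mul, abs_of_nonneg ((hπ t x).1 u)]
  refine this.trans ((Finset.sum_le_sum fun u _ =>
    mul_le_mul_of_nonneg_left (hL x u ν ν' hν hν') ((hπ t x).1 u)).trans ?_)
  rw [← Finset.sum_mul, (hπ t x).2, one_mul]

lemma stateLaw_mem {P : 𝒳 → 𝒰 → (𝒳 → ℝ) → 𝒳 → ℝ} (hP : IsKernel P) {π : ℕ → 𝒳 → 𝒰 → ℝ}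
    (hπ : IsPolicy π) {μ0 : 𝒳 → ℝ} (hμ0 : μ0 ∈ simplex 𝒳) {G : ℕ → 𝒳 → ℝ}
    (hG : ∀ t, G t ∈ subProb 𝒳) (t : ℕ) : stateLaw P μ0 G π t ∈ simplex 𝒳 := by
  induction t with
  | zero => exact hμ0
  | succ t ih =>
    refine ⟨fun y => Finset.sum_nonneg fun x _ => mul_nonneg (ih.1 x)
      ((qk_mem hP hπ t x (hG t)).1 y), ?_⟩
    simp only [stateLaw]
    rw [Finset.sum_comm]
    have := fun x => (qk_mem hP hπ t x (hG t)).2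
    simp only [qk] at this
    simp only [← Finset.mul_sum, this, mul_one, ih.2]

lemma EE_stateLaw_succ (P : 𝒳 → 𝒰 → (𝒳 → ℝ) → 𝒳 → ℝ) (π : ℕ → 𝒳 → 𝒰 → ℝ)
    (μ0 : 𝒳 → ℝ) (G : ℕ → 𝒳 → ℝ) (t : ℕ) (f : 𝒳 → ℝ) :
    EE (stateLaw P μ0 G π (t+1)) f =
      EE (stateLaw P μ0 G π t) (fun x => EE (qk P π t x (G t)) f) := by
  simp only [EE, stateLaw, qk, Finset.sum_mul (Finset.univ : Finset 𝒳)]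
  rw [Finset.sum_comm]
  refine Finset.sum_congr rfl fun x _ => ?_
  rw [Finset.mul_sum]
  exact Finset.sum_congr rfl fun y _ => by ring

variable [DecidableEq 𝒳]

lemma empNbhd_mem {ξ : Fin N → Fin N → ℝ} (hξ : ∀ i j, 0 ≤ ξ i j ∧ ξ i j ≤ 1)
    (X : Fin N → 𝒳) (i : Fin N) : empNbhd ξ X i ∈ subProb 𝒳 := by
  refine ⟨fun x => mul_nonneg (by positivity) (Finset.sum_nonneg fun j _ =>
    mul_nonneg (hξ i j).1 (by split_ifs <;> norm_num)), ?_⟩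
  simp only [empNbhd]
  rw [← Finset.mul_sum, Finset.sum_comm]
  simp only [← Finset.mul_sum, Finset.sum_ite_eq, Finset.mem_univ, if_true, mul_one]
  have : ∑ j, ξ i j ≤ N := by
    refine (Finset.sum_le_sum fun j _ => (hξ i j).2).trans ?_
    simp
  calc (N:ℝ)⁻¹ * ∑ j, ξ i j ≤ (N:ℝ)⁻¹ * N := by gcongr
    _ ≤ 1 := inv_mul_le_one

lemma EE_jointLaw_succ (P : 𝒳 → 𝒰 → (𝒳 → ℝ) → 𝒳 → ℝ) (μ0 : 𝒳 → ℝ) (ξ : Fin N → Fin N → ℝ)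
    (πs : Fin N → ℕ → 𝒳 → 𝒰 → ℝ) (t : ℕ) (f : (Fin N → 𝒳) → ℝ) :
    EE (jointLaw P μ0 ξ πs (t+1)) f = EE (jointLaw P μ0 ξ πs t)
      (fun X => EE (prodLaw fun i => qk P (πs i) t (X i) (empNbhd ξ X i)) f) := by
  simp only [EE, jointLaw, qk, prodLaw, Finset.sum_mul (Finset.univ : Finset (Fin N → 𝒳))]
  rw [Finset.sum_comm]
  refine Finset.sum_congr rfl fun x _ => ?_
  rw [Finset.mul_sum]
  exact Finset.sum_congr rfl fun y _ => by ring

lemma jointLaw_mem {P : 𝒳 → 𝒰 → (𝒳 → ℝ) → 𝒳 → ℝ} (hP : IsKernel P)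
    {μ0 : 𝒳 → ℝ} (hμ0 : μ0 ∈ simplex 𝒳) {ξ : Fin N → Fin N → ℝ}
    (hξ : ∀ i j, 0 ≤ ξ i j ∧ ξ i j ≤ 1) {πs : Fin N → ℕ → 𝒳 → 𝒰 → ℝ}
    (hπ : ∀ i, IsPolicy (πs i)) (t : ℕ) :
    jointLaw P μ0 ξ πs t ∈ simplex (Fin N → 𝒳) := by
  induction t with
  | zero => exact prodLaw_mem (q := fun _ => μ0) fun _ => hμ0
  | succ t ih =>
    have hm := fun X : Fin N → 𝒳 => prodLaw_mem
      (q := fun i => qk P (πs i) t (X i) (empNbhd ξ X i))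
      fun i => qk_mem hP (hπ i) t (X i) (empNbhd_mem hξ X i)
    refine ⟨fun y => Finset.sum_nonneg fun x _ => mul_nonneg (ih.1 x) ((hm x).1 y), ?_⟩
    have h := EE_jointLaw_succ P μ0 ξ πs t (fun _ => 1)
    simp only [EE_const (hm _), EE_const ih] at h
    simpa [EE] using h

lemma emp_bound {ξ : Fin N → Fin N → ℝ} {q : (Fin N → 𝒳) → ℝ} (hq : q ∈ simplex (Fin N → 𝒳))
    (hξ : ∀ i j, 0 ≤ ξ i j ∧ ξ i j ≤ 1) (ν : Fin N → 𝒳 → ℝ) (D : ℝ)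
    (hD : ∀ f : Fin N → 𝒳 → ℝ, (∀ j y, |f j y| ≤ 1) →
      EE q (fun X => |(N:ℝ)⁻¹ * ∑ j, (f j (X j) - EE (ν j) (f j))|) ≤ D)
    (i : Fin N) (G : 𝒳 → ℝ) :
    EE q (fun X => l1dist (empNbhd ξ X i) G) ≤ Fintype.card 𝒳 * D +
      l1dist (fun x => (N:ℝ)⁻¹ * ∑ k, ξ i k * ν k x) G := by
  have key : ∀ x : 𝒳, EE q (fun X => |empNbhd ξ X i x - (N:ℝ)⁻¹ * ∑ k, ξ i k * ν k x|) ≤ D := by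
    intro x
    refine le_trans (le_of_eq ?_) (hD (fun j y => ξ i j * (if y = x then 1 else 0)) ?_)
    · congr 1
      funext X
      congr 1
      simp [empNbhd, EE, ← mul_sub, ← Finset.sum_sub_distrib, mul_comm]
    · intro j y
      rw [abs_of_nonneg (mul_nonneg (hξ i j).1 (by split_ifs <;> norm_num))]
      split_ifs <;> simp [(hξ i j).2]
  have h1 : EE q (fun X => l1dist (empNbhd ξ X i) G) ≤
      EE q (fun X => (∑ x, |empNbhd ξ X i x - (N:ℝ)⁻¹ * ∑ k, ξ i k * ν k x|) +
        l1dist (fun x => (N:ℝ)⁻¹ * ∑ k, ξ i k * ν k x) G) := by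
    refine EE_mono hq fun X => ?_
    simp only [l1dist, ← Finset.sum_add_distrib]
    exact Finset.sum_le_sum fun x _ => abs_sub_le _ _ _
  refine h1.trans ?_
  rw [EE_add, EE_const hq, EE_sum]
  have : ∑ x : 𝒳, EE q (fun X => |empNbhd ξ X i x - (N:ℝ)⁻¹ * ∑ k, ξ i k * ν k x|) ≤
      Fintype.card 𝒳 * D := by
    refine (Finset.sum_le_sum fun x _ => key x).trans ?_
    simp
  linarith

lemma chaos (hN : 0 < N) {P : 𝒳 → 𝒰 → (𝒳 → ℝ) → 𝒳 → ℝ} (hP : IsKernel P)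
    {μ0 : 𝒳 → ℝ} (hμ0 : μ0 ∈ simplex 𝒳) {LP : ℝ} (hLP : 0 ≤ LP) (hL : KernelLipschitz P LP)
    {ξ : Fin N → Fin N → ℝ}
    (hξ : ∀ i j, 0 ≤ ξ i j ∧ ξ i j ≤ 1) {πs : Fin N → ℕ → 𝒳 → 𝒰 → ℝ}
    (hπ : ∀ i, IsPolicy (πs i)) (G : Fin N → ℕ → 𝒳 → ℝ) (hG : ∀ i t, G i t ∈ subProb 𝒳)
    (κ : ℝ) (hκ : (Real.sqrt N)⁻¹ ≤ κ) (T : ℕ)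
    (hΔ : ∀ t < T, (N:ℝ)⁻¹ * ∑ j, l1dist
      (fun x => (N:ℝ)⁻¹ * ∑ k, ξ j k * stateLaw P μ0 (G k) (πs k) t x) (G j t) ≤ κ)
    (t : ℕ) (ht : t ≤ T) (f : Fin N → 𝒳 → ℝ) (hf : ∀ j y, |f j y| ≤ 1) :
    EE (jointLaw P μ0 ξ πs t) (fun X => |(N:ℝ)⁻¹ * ∑ j, (f j (X j) -
      EE (stateLaw P μ0 (G j) (πs j) t) (f j))|) ≤
      (2 + LP + LP * Fintype.card 𝒳) ^ t * κ := by
  have hκ0 : 0 ≤ κ := le_trans (by positivity) hκ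
  have hNpos : (0:ℝ) < N := by exact_mod_cast hN
  induction t generalizing f with
  | zero =>
    simp only [pow_zero, one_mul]
    exact (EE_lln hN (q := fun _ => μ0) (fun _ => hμ0) hf).trans hκ
  | succ t ih =>
    have ih := ih (by omega)
    set q := jointLaw P μ0 ξ πs t with hq
    have hqm : q ∈ simplex _ := jointLaw_mem hP hμ0 hξ hπ t
    have hem := fun i => emp_bound hqm hξ (fun j => stateLaw P μ0 (G j) (πs j) t) _ ih i (G i t)
    set D := (2 + LP + LP * (Fintype.card 𝒳:ℝ)) ^ t * κ with hD
    have hD0 : κ ≤ D := le_mul_of_one_le_left hκ0 (one_le_pow₀ (by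
      have : 0 ≤ LP * (Fintype.card 𝒳:ℝ) := by positivity
      linarith))
    rw [EE_jointLaw_succ]
    have hstep : ∀ X : Fin N → 𝒳,
        EE (prodLaw fun i => qk P (πs i) t (X i) (empNbhd ξ X i)) (fun Y => |(N:ℝ)⁻¹ * ∑ j, (f j (Y j) -
          EE (stateLaw P μ0 (G j) (πs j) (t+1)) (f j))|) ≤
        (κ + (N:ℝ)⁻¹ * ∑ j, LP * l1dist (empNbhd ξ X j) (G j t)) +
        |(N:ℝ)⁻¹ * ∑ j, (EE (qk P (πs j) t (X j) (G j t)) (f j) -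
          EE (stateLaw P μ0 (G j) (πs j) t) (fun x => EE (qk P (πs j) t x (G j t)) (f j)))| := by
      intro X
      have hqk := fun i => qk_mem hP (hπ i) t (X i) (empNbhd_mem hξ X i)
      have hpm := prodLaw_mem hqk
      have hl := (EE_lln hN hqk hf).trans hκ
      have h2 : |(N:ℝ)⁻¹ * ∑ j, (EE (qk P (πs j) t (X j) (empNbhd ξ X j)) (f j) -
          EE (qk P (πs j) t (X j) (G j t)) (f j))| ≤
          (N:ℝ)⁻¹ * ∑ j, LP * l1dist (empNbhd ξ X j) (G j t) := by
        rw [abs_mul, abs_of_pos (by positivity : (0:ℝ) < (N:ℝ)⁻¹)]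
        refine mul_le_mul_of_nonneg_left ?_ (by positivity)
        refine (Finset.abs_sum_le_sum_abs _ _).trans (Finset.sum_le_sum fun j _ => ?_)
        exact (EE_l1 _ _ _ (hf j)).trans
          (qk_lip hL (hπ j) t (X j) (empNbhd_mem hξ X j) (hG j t))
      refine (EE_mono hpm (g := fun Y =>
        |(N:ℝ)⁻¹ * ∑ j, (f j (Y j) - EE (qk P (πs j) t (X j) (empNbhd ξ X j)) (f j))| +
        ((N:ℝ)⁻¹ * ∑ j, LP * l1dist (empNbhd ξ X j) (G j t) +
        |(N:ℝ)⁻¹ * ∑ j, (EE (qk P (πs j) t (X j) (G j t)) (f j) -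
          EE (stateLaw P μ0 (G j) (πs j) t) (fun x => EE (qk P (πs j) t x (G j t)) (f j)))|))
        fun Y => ?_).trans ?_
      · have e : (N:ℝ)⁻¹ * ∑ j, (f j (Y j) - EE (stateLaw P μ0 (G j) (πs j) (t+1)) (f j)) =
          (N:ℝ)⁻¹ * ∑ j, (f j (Y j) - EE (qk P (πs j) t (X j) (empNbhd ξ X j)) (f j)) +
          ((N:ℝ)⁻¹ * ∑ j, (EE (qk P (πs j) t (X j) (empNbhd ξ X j)) (f j) -
          EE (qk P (πs j) t (X j) (G j t)) (f j)) +
          (N:ℝ)⁻¹ * ∑ j, (EE (qk P (πs j) t (X j) (G j t)) (f j) -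
          EE (stateLaw P μ0 (G j) (πs j) t) (fun x => EE (qk P (πs j) t x (G j t)) (f j)))) := by
          simp only [EE_stateLaw_succ, ← mul_add, ← Finset.sum_add_distrib]
          congr 1
          exact Finset.sum_congr rfl fun j _ => by ring
        rw [e]
        refine (abs_add_le _ _).trans (add_le_add le_rfl ((abs_add_le _ _).trans ?_))
        exact add_le_add h2 le_rfl
      · rw [EE_add, EE_const hpm]
        linarith
    refine (EE_mono hqm hstep).trans ?_
    rw [EE_add, EE_add, EE_const hqm, EE_mul, EE_sum]
    simp only [EE_mul]
    have h3 := ih (fun j x => EE (qk P (πs j) t x (G j t)) (f j))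
      (fun j x => EE_abs_le (qk_mem hP (hπ j) t x (hG j t)) (hf j))
    have h4 : (N:ℝ)⁻¹ * ∑ j, LP * EE q (fun X => l1dist (empNbhd ξ X j) (G j t)) ≤
        LP * (Fintype.card 𝒳 * D + κ) := by
      rw [← Finset.mul_sum, mul_left_comm]
      refine mul_le_mul_of_nonneg_left ?_ hLP
      refine (mul_le_mul_of_nonneg_left (Finset.sum_le_sum fun j _ => hem j)
        (by positivity)).trans ?_
      rw [Finset.sum_add_distrib, mul_add]
      refine add_le_add (le_of_eq ?_) (hΔ t (by omega))
      simp
      field_simp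
    rw [pow_succ]
    have : LP * κ ≤ LP * D := mul_le_mul_of_nonneg_left hD0 hLP
    have e2 : (2 + LP + LP * (Fintype.card 𝒳:ℝ)) ^ t * (2 + LP + LP * Fintype.card 𝒳) * κ =
      2 * D + LP * D + LP * (Fintype.card 𝒳 * D) := by rw [hD]; ring
    rw [e2]
    linarith

lemma single {P : 𝒳 → 𝒰 → (𝒳 → ℝ) → 𝒳 → ℝ} (hP : IsKernel P)
    {μ0 : 𝒳 → ℝ} (hμ0 : μ0 ∈ simplex 𝒳) {LP : ℝ} (hLP : 0 ≤ LP) (hL : KernelLipschitz P LP)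
    {ξ : Fin N → Fin N → ℝ}
    (hξ : ∀ i j, 0 ≤ ξ i j ∧ ξ i j ≤ 1) {πs : Fin N → ℕ → 𝒳 → 𝒰 → ℝ}
    (hπ : ∀ i, IsPolicy (πs i)) (i : Fin N) (G : ℕ → 𝒳 → ℝ) (hG : ∀ t, G t ∈ subProb 𝒳)
    (η : ℝ) (T : ℕ)
    (hη : ∀ t < T, EE (jointLaw P μ0 ξ πs t) (fun X => l1dist (empNbhd ξ X i) (G t)) ≤ η)
    (t : ℕ) (ht : t ≤ T) (f : 𝒳 → ℝ) (hf : ∀ y, |f y| ≤ 1) :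
    |EE (jointLaw P μ0 ξ πs t) (fun X => f (X i)) - EE (stateLaw P μ0 G (πs i) t) f| ≤
      t * (LP * η) := by
  induction t generalizing f with
  | zero =>
    have : EE (jointLaw P μ0 ξ πs 0) (fun X => f (X i)) = EE μ0 f :=
      EE_prod_one (q := fun _ => μ0) (fun _ => hμ0) i f
    rw [this]; simp [stateLaw]
  | succ t ih =>
    have ih := ih (by omega) (fun x => EE (qk P (πs i) t x (G t)) f)
      (fun x => EE_abs_le (qk_mem hP (hπ i) t x (hG t)) hf)
    have hqm := jointLaw_mem hP hμ0 hξ hπ t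
    rw [EE_jointLaw_succ, EE_stateLaw_succ]
    simp only [EE_prod_one (fun j => qk_mem hP (hπ j) t (_) (empNbhd_mem hξ _ j)) i f]
    have h2 : |EE (jointLaw P μ0 ξ πs t) (fun X => EE (qk P (πs i) t (X i) (empNbhd ξ X i)) f) -
        EE (jointLaw P μ0 ξ πs t) (fun X => EE (qk P (πs i) t (X i) (G t)) f)| ≤ LP * η := by
      rw [← EE_sub]
      refine (EE_abs hqm _).trans ?_
      refine (EE_mono hqm (g := fun X => LP * l1dist (empNbhd ξ X i) (G t)) fun X => ?_).trans ?_
      · exact (EE_l1 _ _ _ hf).trans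
          (qk_lip hL (hπ i) t (X i) (empNbhd_mem hξ X i) (hG t))
      · rw [EE_mul]
        exact mul_le_mul_of_nonneg_left (hη t (by omega)) hLP
    refine (abs_sub_le _ _ _).trans ((add_le_add h2 ih).trans (le_of_eq ?_))
    push_cast; ring

lemma objective {P : 𝒳 → 𝒰 → (𝒳 → ℝ) → 𝒳 → ℝ} (hP : IsKernel P)
    {r : 𝒳 → 𝒰 → (𝒳 → ℝ) → ℝ} {Lr R : ℝ} (hLr : 0 ≤ Lr) (hr : RewardLipschitz r Lr)
    (hR0 : 0 < R) (hR : ∀ x u ν, ν ∈ subProb 𝒳 → |r x u ν| ≤ R)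
    {μ0 : 𝒳 → ℝ} (hμ0 : μ0 ∈ simplex 𝒳) {LP : ℝ} (hLP : 0 ≤ LP) (hL : KernelLipschitz P LP)
    {ξ : Fin N → Fin N → ℝ}
    (hξ : ∀ i j, 0 ≤ ξ i j ∧ ξ i j ≤ 1) {πs : Fin N → ℕ → 𝒳 → 𝒰 → ℝ}
    (hπ : ∀ i, IsPolicy (πs i)) (i : Fin N) (G : ℕ → 𝒳 → ℝ) (hG : ∀ t, G t ∈ subProb 𝒳)
    (η : ℝ) (hη0 : 0 ≤ η) (T : ℕ)
    (hη : ∀ t < T, EE (jointLaw P μ0 ξ πs t) (fun X => l1dist (empNbhd ξ X i) (G t)) ≤ η) :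
    |JN T r P μ0 ξ πs i - Jmf T r P μ0 G (πs i)| ≤ T * (Lr + R * (T * LP)) * η := by
  have main : ∀ t ∈ Finset.range T,
      |EE (jointLaw P μ0 ξ πs t) (fun X => ∑ u, πs i t (X i) u * r (X i) u (empNbhd ξ X i)) -
      EE (stateLaw P μ0 G (πs i) t) (fun x => ∑ u, πs i t x u * r x u (G t))| ≤
      (Lr + R * (T * LP)) * η := by
    intro t ht
    have ht := Finset.mem_range.1 ht
    have hqm := jointLaw_mem hP hμ0 hξ hπ t
    have h1 : |EE (jointLaw P μ0 ξ πs t)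
          (fun X => ∑ u, πs i t (X i) u * r (X i) u (empNbhd ξ X i)) -
        EE (jointLaw P μ0 ξ πs t) (fun X => ∑ u, πs i t (X i) u * r (X i) u (G t))|
        ≤ Lr * η := by
      rw [← EE_sub]
      refine (EE_abs hqm _).trans ?_
      refine (EE_mono hqm (g := fun X => Lr * l1dist (empNbhd ξ X i) (G t)) fun X => ?_).trans ?_
      · have := EE_mono (Ω := 𝒰) (q := πs i t (X i)) (hπ i t (X i))
          (fun u => hr (X i) u _ _ (empNbhd_mem hξ X i) (hG t))
        rw [EE_const (hπ i t (X i))] at this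
        refine le_trans ?_ this
        refine le_trans (le_of_eq ?_) (EE_abs (hπ i t (X i)) _)
        rw [EE_sub]; rfl
      · rw [EE_mul]
        exact mul_le_mul_of_nonneg_left (hη t ht) hLr
    have h2 := single hP hμ0 hLP hL hξ hπ i G hG η T hη t ht.le
      (fun x => R⁻¹ * ∑ u, πs i t x u * r x u (G t)) (fun x => by
        rw [abs_mul, abs_of_pos (inv_pos.2 hR0), inv_mul_le_iff₀ hR0, mul_one]
        exact EE_abs_le (Ω := 𝒰) (hπ i t x) (fun u => hR x u _ (hG t)))
    rw [EE_mul, EE_mul, ← mul_sub, abs_mul, abs_of_pos (inv_pos.2 hR0),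
      inv_mul_le_iff₀ hR0] at h2
    refine (abs_sub_le _ _ _).trans ((add_le_add h1 h2).trans ?_)
    have : (t:ℝ) * (LP * η) ≤ T * (LP * η) := by
      have : (t:ℝ) ≤ T := by exact_mod_cast ht.le
      gcongr
    have := mul_le_mul_of_nonneg_left this hR0.le
    linarith
  have e : JN T r P μ0 ξ πs i - Jmf T r P μ0 G (πs i) = ∑ t ∈ Finset.range T,
      (EE (jointLaw P μ0 ξ πs t) (fun X => ∑ u, πs i t (X i) u * r (X i) u (empNbhd ξ X i)) -
      EE (stateLaw P μ0 G (πs i) t) (fun x => ∑ u, πs i t x u * r x u (G t))) := by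
    rw [Finset.sum_sub_distrib]; rfl
  rw [e]
  refine (Finset.abs_sum_le_sum_abs _ _).trans ((Finset.sum_le_sum main).trans ?_)
  simp [mul_assoc]

/-- Index of the equivalence class of agent `j`. -/
def blk {N M : ℕ} (hM : 0 < M) (j : Fin N) : Fin M :=
  ⟨(((j : ℕ) + 1) * M - 1) / N, by
    have hN : 0 < N := j.pos
    rw [Nat.div_lt_iff_lt_mul hN]
    have h1 : ((j : ℕ) + 1) * M ≤ N * M := Nat.mul_le_mul_right _ j.isLt
    have h2 : 0 < ((j : ℕ) + 1) * M := by positivity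
    rw [mul_comm M N]
    omega⟩

lemma blk_iff {N M : ℕ} (hM : 0 < M) (j : Fin N) (n : Fin M) :
    blk hM j = n ↔ (n : ℕ) * N < ((j : ℕ) + 1) * M ∧ ((j : ℕ) + 1) * M ≤ ((n : ℕ) + 1) * N := by
  have hN : 0 < N := j.pos
  have h2 : 0 < ((j : ℕ) + 1) * M := by positivity
  rw [Fin.ext_iff]
  simp only [blk]
  rw [Nat.div_eq_iff hN]
  generalize ((j : ℕ) + 1) * M = A at *
  rw [add_mul]
  generalize (n : ℕ) * N = B at *
  omega

lemma blk_mem {N M : ℕ} (hM : 0 < M) (j : Fin N) :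
    (((j : ℕ) : ℝ) + 1) / N ∈
      Set.Ioc (((blk hM j : ℕ) : ℝ) / M) ((((blk hM j : ℕ) : ℝ) + 1) / M) := by
  have hN : (0:ℝ) < N := by exact_mod_cast j.pos
  have hM' : (0:ℝ) < M := by exact_mod_cast hM
  obtain ⟨h1, h2⟩ := (blk_iff hM j _).1 rfl
  rw [Set.mem_Ioc, div_lt_div_iff₀ hM' hN, div_le_div_iff₀ hN hM']
  exact ⟨by exact_mod_cast h1, by exact_mod_cast h2⟩

lemma rep_mem {M : ℕ} (m : Fin M) : rep M m ∈ Set.Icc (0:ℝ) 1 := by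
  have hM' : (0:ℝ) < M := by exact_mod_cast m.pos
  refine ⟨by unfold rep; positivity, ?_⟩
  unfold rep
  rw [div_le_one hM']
  exact_mod_cast m.isLt

lemma rep_blk {N M : ℕ} (hM : 0 < M) (j : Fin N) :
    |rep M (blk hM j) - (((j : ℕ) : ℝ) + 1) / N| ≤ 1 / M := by
  obtain ⟨h1, h2⟩ := blk_mem hM j
  have hM' : (0:ℝ) < 1 / M := by
    have : (0:ℝ) < M := by exact_mod_cast hM
    positivity
  unfold rep
  rw [add_div ((blk hM j : ℕ) : ℝ) 1 (M:ℝ)] at h2 ⊢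
  rw [abs_le]
  constructor <;> linarith

lemma blk_card {N M : ℕ} (hM : 0 < M) (n : Fin M) :
    |((Finset.univ.filter fun k : Fin N => blk hM k = n).card : ℝ) - (N:ℝ) / M| ≤ 1 := by
  have hM' : (0:ℝ) < M := by exact_mod_cast hM
  have hc : (Finset.univ.filter fun k : Fin N => blk hM k = n).card =
      (Finset.Ioc ((n : ℕ) * N / M) (((n : ℕ) + 1) * N / M)).card := by
    refine Finset.card_bij (fun k _ => (k : ℕ) + 1) ?_ ?_ ?_
    · intro k hk
      rw [Finset.mem_filter, blk_iff] at hk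
      rw [Finset.mem_Ioc, Nat.div_lt_iff_lt_mul hM, Nat.le_div_iff_mul_le hM]
      exact hk.2
    · intro a _ b _ h
      exact Fin.ext (by omega)
    · intro b hb
      rw [Finset.mem_Ioc, Nat.div_lt_iff_lt_mul hM, Nat.le_div_iff_mul_le hM] at hb
      have hb0 : 0 < b := by
        rcases Nat.eq_zero_or_pos b with h | h
        · rw [h] at hb; simp at hb
        · exact h
      have hbN : b ≤ N := by
        have : b * M ≤ N * M := hb.2.trans (by rw [mul_comm]; exact Nat.mul_le_mul_left _ n.isLt)
        exact Nat.le_of_mul_le_mul_right this hM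
      have e : b - 1 + 1 = b := by omega
      refine ⟨⟨b - 1, by omega⟩, ?_, e⟩
      rw [Finset.mem_filter, blk_iff]
      simp only [e]
      exact ⟨Finset.mem_univ _, hb⟩
  rw [hc, Nat.card_Ioc]
  have hle : (n : ℕ) * N / M ≤ ((n : ℕ) + 1) * N / M :=
    Nat.div_le_div_right (Nat.mul_le_mul_right _ (by omega))
  rw [Nat.cast_sub hle]
  have f1 : ∀ a : ℕ, ((a / M : ℕ) : ℝ) ≤ (a:ℝ) / M := fun a => Nat.cast_div_le
  have f2 : ∀ a : ℕ, (a:ℝ) / M ≤ ((a / M : ℕ) : ℝ) + 1 := fun a => by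
    rw [div_le_iff₀ hM']
    have := Nat.lt_div_mul_add hM (a := a)
    have h : a ≤ (a / M + 1) * M := by rw [add_mul]; omega
    exact_mod_cast h
  have a1 := f1 ((n : ℕ) * N)
  have a2 := f2 ((n : ℕ) * N)
  have b1 := f1 (((n : ℕ) + 1) * N)
  have b2 := f2 (((n : ℕ) + 1) * N)
  have e : (((((n : ℕ) + 1) * N : ℕ)) : ℝ) / M = ((((n : ℕ) * N : ℕ)) : ℝ) / M + (N:ℝ) / M := by
    push_cast; ring
  rw [e] at b1 b2
  rw [abs_le]
  constructor <;> linarith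

lemma blk_avg {N M : ℕ} (hN : 0 < N) (hM : 0 < M) (F : Fin M → ℝ) (hF : ∀ n, |F n| ≤ 1) :
    |(N:ℝ)⁻¹ * ∑ k : Fin N, F (blk hM k) - (M:ℝ)⁻¹ * ∑ n, F n| ≤ M / N := by
  have hM' : (0:ℝ) < M := by exact_mod_cast hM
  have hN' : (0:ℝ) < N := by exact_mod_cast hN
  have h1 : ∑ k : Fin N, F (blk hM k) =
      ∑ n, ((Finset.univ.filter fun k : Fin N => blk hM k = n).card : ℝ) * F n := by
    rw [← Finset.sum_fiberwise Finset.univ (fun k : Fin N => blk hM k)]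
    refine Finset.sum_congr rfl fun n _ => ?_
    rw [Finset.sum_congr rfl (g := fun _ => F n)]
    · simp
    · intro k hk
      rw [(Finset.mem_filter.1 hk).2]
  have h2 : (N:ℝ)⁻¹ * ∑ k : Fin N, F (blk hM k) - (M:ℝ)⁻¹ * ∑ n, F n =
      (N:ℝ)⁻¹ * ∑ n, (((Finset.univ.filter fun k : Fin N => blk hM k = n).card : ℝ) - (N:ℝ)/M)
        * F n := by
    rw [h1]
    simp only [sub_mul, Finset.sum_sub_distrib, mul_sub, ← Finset.mul_sum]
    field_simp
  rw [h2, abs_mul, abs_of_pos (inv_pos.2 hN'), div_eq_inv_mul (M:ℝ) (N:ℝ)]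
  refine mul_le_mul_of_nonneg_left ?_ (inv_nonneg.2 hN'.le)
  refine (Finset.abs_sum_le_sum_abs _ _).trans ((Finset.sum_le_sum (g := fun _ => (1:ℝ))
    fun n _ => ?_).trans (by simp))
  rw [abs_mul]
  exact mul_le_one₀ (blk_card hM n) (abs_nonneg _) (hF n)

/-- Indicator of the `k`-th cell. -/
noncomputable def cell (N : ℕ) (k : Fin N) (a : ℝ) : ℝ :=
  if ((k : ℕ) : ℝ) / N < a ∧ a ≤ (((k : ℕ) : ℝ) + 1) / N then 1 else 0

lemma cell_eq (N : ℕ) (k : Fin N) :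
    cell N k = Set.indicator (Set.Ioc (((k : ℕ) : ℝ) / N) ((((k : ℕ) : ℝ) + 1) / N)) 1 := by
  funext a
  simp [cell, Set.indicator_apply]

lemma cell_meas (N : ℕ) (k : Fin N) : Measurable (cell N k) := by
  rw [cell_eq]
  exact (measurable_const (a := (1:ℝ))).indicator measurableSet_Ioc

lemma cell_sum_of (N : ℕ) (k : Fin N) {a : ℝ} (h1 : ((k : ℕ) : ℝ) / N < a)
    (h2 : a ≤ (((k : ℕ) : ℝ) + 1) / N) (c : Fin N → ℝ) : ∑ j, cell N j a * c j = c k := by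
  have hN : (0:ℝ) < N := by exact_mod_cast k.pos
  rw [Finset.sum_eq_single k]
  · simp [cell, h1, h2]
  · intro j _ hj
    have : ¬ (((j : ℕ) : ℝ) / N < a ∧ a ≤ (((j : ℕ) : ℝ) + 1) / N) := by
      rintro ⟨h3, h4⟩
      apply hj
      have h5 := h1.trans_le h4
      have h6 := h3.trans_le h2
      rw [div_lt_div_iff_of_pos_right hN] at h5 h6
      have h5' : (k : ℕ) < (j : ℕ) + 1 := by exact_mod_cast h5
      have h6' : (j : ℕ) < (k : ℕ) + 1 := by exact_mod_cast h6
      exact Fin.ext (by omega)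
    simp [cell, this]
  · simp

lemma cell_exists {N : ℕ} (hN : 0 < N) {a : ℝ} (ha : a ∈ Set.Ioc (0:ℝ) 1) :
    ∃ k : Fin N, ((k : ℕ) : ℝ) / N < a ∧ a ≤ (((k : ℕ) : ℝ) + 1) / N := by
  have hN' : (0:ℝ) < N := by exact_mod_cast hN
  have hp : 0 < ⌈(N:ℝ) * a⌉₊ := Nat.ceil_pos.2 (mul_pos hN' ha.1)
  have hle : ⌈(N:ℝ) * a⌉₊ ≤ N := Nat.ceil_le.2 (mul_le_of_le_one_right hN'.le ha.2)
  refine ⟨⟨⌈(N:ℝ) * a⌉₊ - 1, by omega⟩, ?_, ?_⟩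
  · rw [div_lt_iff₀ hN', mul_comm a]
    exact Nat.lt_ceil.1 (by simp only; omega)
  · rw [le_div_iff₀ hN', mul_comm a]
    have := Nat.le_ceil ((N:ℝ) * a)
    have e : ((⌈(N:ℝ) * a⌉₊ - 1 : ℕ) : ℝ) + 1 = ⌈(N:ℝ) * a⌉₊ := by
      rw [Nat.cast_sub hp]; simp
    simp only [e]
    exact this

lemma cell_sum_abs (N : ℕ) (a : ℝ) (c : Fin N → ℝ) {C : ℝ} (hC : 0 ≤ C) (hc : ∀ k, |c k| ≤ C) :
    |∑ j, cell N j a * c j| ≤ C := by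
  by_cases h : ∃ k : Fin N, ((k : ℕ) : ℝ) / N < a ∧ a ≤ (((k : ℕ) : ℝ) + 1) / N
  · obtain ⟨k, h1, h2⟩ := h
    rw [cell_sum_of N k h1 h2]
    exact hc k
  · push Not at h
    have : ∀ j : Fin N, cell N j a = 0 := fun j => by
      simp only [cell]
      rw [if_neg]
      rintro ⟨h1, h2⟩
      exact absurd h2 (not_le.2 (h j h1))
    simp [this, hC]

lemma cell_sum_meas (N : ℕ) (c : Fin N → ℝ) : Measurable fun a => ∑ j, cell N j a * c j :=
  Finset.measurable_sum _ fun j _ => (cell_meas N j).mul_const _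

lemma intOn_bdd {f : ℝ → ℝ} (hf : Measurable f) {C : ℝ} (hC : ∀ x, |f x| ≤ C) :
    IntegrableOn f (Set.Ioc (0:ℝ) 1) :=
  Measure.integrableOn_of_bounded (M := C) (by simp) hf.aestronglyMeasurable
    (Filter.Eventually.of_forall fun x => by simpa using hC x)

lemma cell_int {N : ℕ} (hN : 0 < N) (c : Fin N → ℝ) :
    ∫ a in Set.Ioc (0:ℝ) 1, ∑ j, cell N j a * c j = (N:ℝ)⁻¹ * ∑ j, c j := by
  have hN' : (0:ℝ) < N := by exact_mod_cast hN
  rw [integral_finsetSum]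
  · rw [Finset.mul_sum]
    refine Finset.sum_congr rfl fun j _ => ?_
    rw [integral_mul_const]
    congr 1
    rw [cell_eq, setIntegral_indicator measurableSet_Ioc]
    have : Set.Ioc (0:ℝ) 1 ∩ Set.Ioc (((j : ℕ) : ℝ) / N) ((((j : ℕ) : ℝ) + 1) / N) =
        Set.Ioc (((j : ℕ) : ℝ) / N) ((((j : ℕ) : ℝ) + 1) / N) := by
      apply Set.inter_eq_right.2
      apply Set.Ioc_subset_Ioc (by positivity)
      rw [div_le_one hN']
      exact_mod_cast j.isLt
    rw [this]
    simp only [Pi.one_apply, setIntegral_const, smul_eq_mul, mul_one, Real.volume_real_Ioc]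
    rw [add_div, add_sub_cancel_left, max_eq_left (by positivity), one_div]
  · intro j _
    refine intOn_bdd ((cell_meas N j).mul_const _) (C := |c j|) fun x => ?_
    rw [abs_mul]
    refine mul_le_of_le_one_left (abs_nonneg _) ?_
    unfold cell; split_ifs <;> simp

lemma stepGraphon_eq {N : ℕ} (ξ : Fin N → Fin N → ℝ) (a b : ℝ) :
    stepGraphon ξ a b = ∑ i, cell N i a * ∑ j, cell N j b * ξ i j := by
  simp only [stepGraphon, Finset.mul_sum]
  exact Finset.sum_congr rfl fun i _ => Finset.sum_congr rfl fun j _ => by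
    simp only [cell]; ring

lemma op_bound {N : ℕ} (hN : 0 < N) {ξ : Fin N → Fin N → ℝ}
    (hξ : ∀ i j, 0 ≤ ξ i j ∧ ξ i j ≤ 1) {W : ℝ → ℝ → ℝ} (hW : IsGraphon W) {LW : ℝ}
    (hLW : 0 ≤ LW) (hWL : GraphonLipschitz W LW) {ε δ : ℝ}
    (hop : ∀ g : ℝ → ℝ, Measurable g → (∀ β, |g β| ≤ 1) →
      (∫ α in Set.Ioc (0:ℝ) 1, |∫ β in Set.Ioc (0:ℝ) 1, (stepGraphon ξ α β - W α β) * g β|) ≤ ε)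
    (a : Fin N → ℝ) (ha : ∀ j, a j ∈ Set.Icc (0:ℝ) 1)
    (haδ : ∀ j, |a j - (((j : ℕ) : ℝ) + 1) / N| ≤ δ)
    (c : Fin N → ℝ) (hc : ∀ k, |c k| ≤ 1) :
    (N:ℝ)⁻¹ * ∑ j, |(N:ℝ)⁻¹ * ∑ k, (ξ j k - W (a j) (a k)) * c k| ≤
      ε + 2 * LW * (δ + 1 / N) := by
  have hN' : (0:ℝ) < N := by exact_mod_cast hN
  set g : ℝ → ℝ := fun β => ∑ k, cell N k β * c k with hg
  have hgm : Measurable g := cell_sum_meas N c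
  have hg1 : ∀ β, |g β| ≤ 1 := fun β => cell_sum_abs N β c zero_le_one hc
  have hdist : ∀ (j : Fin N) (α : ℝ), ((j : ℕ) : ℝ) / N < α → α ≤ (((j : ℕ) : ℝ) + 1) / N →
      |α - a j| ≤ δ + 1 / N := by
    intro j α h1 h2
    have h3 := abs_le.1 (haδ j)
    rw [add_div] at h2 h3
    have : 0 < 1 / (N:ℝ) := by positivity
    rw [abs_le]
    constructor <;> linarith
  have hsm : Measurable (Function.uncurry (stepGraphon ξ)) := by
    have : Function.uncurry (stepGraphon ξ) =
        fun z : ℝ × ℝ => ∑ i, cell N i z.1 * ∑ j, cell N j z.2 * ξ i j := by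
      funext z; exact stepGraphon_eq ξ z.1 z.2
    rw [this]
    refine Finset.measurable_sum _ fun i _ => ((cell_meas N i).comp measurable_fst).mul ?_
    exact (cell_sum_meas N (ξ i)).comp measurable_snd
  have hs1 : ∀ α β, |stepGraphon ξ α β| ≤ 1 := fun α β => by
    rw [stepGraphon_eq]
    refine cell_sum_abs N α _ zero_le_one fun i => cell_sum_abs N β _ zero_le_one fun j => ?_
    rw [abs_of_nonneg (hξ i j).1]; exact (hξ i j).2
  have hW1 : ∀ α β, |W α β| ≤ 1 := fun α β => by
    rw [abs_of_nonneg (hW.2.2 α β).1]; exact (hW.2.2 α β).2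
  set F : ℝ → ℝ → ℝ := fun α β => (stepGraphon ξ α β - W α β) * g β with hF
  have hFm : Measurable (Function.uncurry F) :=
    (hsm.sub hW.1).mul (hgm.comp measurable_snd)
  have hF2 : ∀ α β, |F α β| ≤ 2 := fun α β => by
    rw [hF, abs_mul]
    have h1 : |stepGraphon ξ α β - W α β| ≤ 2 := by
      refine (abs_sub _ _).trans ?_
      linarith [hs1 α β, hW1 α β]
    calc _ ≤ 2 * 1 := mul_le_mul h1 (hg1 β) (abs_nonneg _) (by norm_num)
      _ = 2 := by norm_num
  have hFi : ∀ α, IntegrableOn (F α) (Set.Ioc (0:ℝ) 1) := fun α =>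
    intOn_bdd (hFm.of_uncurry_left (x := α)) (hF2 α)
  set h : ℝ → ℝ := fun α => ∫ β in Set.Ioc (0:ℝ) 1, F α β with hh
  have hhm : Measurable h :=
    (hFm.stronglyMeasurable.integral_prod_right (ν := volume.restrict (Set.Ioc (0:ℝ) 1))).measurable
  have hh2 : ∀ α, |h α| ≤ 2 := fun α => by
    have := norm_setIntegral_le_of_norm_le_const (μ := volume) (s := Set.Ioc (0:ℝ) 1)
      (f := F α) (C := 2) (by simp) (fun β _ => hF2 α β)
    simpa using this
  set b : Fin N → ℝ := fun j => |(N:ℝ)⁻¹ * ∑ k, (ξ j k - W (a j) (a k)) * c k| with hb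
  set err : ℝ := 2 * LW * (δ + 1 / N) with herr
  have hpt : ∀ α ∈ Set.Ioc (0:ℝ) 1, ∑ j, cell N j α * b j ≤ |h α| + err := by
    intro α hα
    obtain ⟨j, hj1, hj2⟩ := cell_exists hN hα
    rw [cell_sum_of N j hj1 hj2]
    have e : (N:ℝ)⁻¹ * ∑ k, (ξ j k - W (a j) (a k)) * c k =
        h α + ∫ β in Set.Ioc (0:ℝ) 1,
          ((∑ k, cell N k β * ((ξ j k - W (a j) (a k)) * c k)) - F α β) := by
      rw [integral_sub _ (hFi α), cell_int hN]
      · ring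
      · refine intOn_bdd (cell_sum_meas N _) (C := 2) fun β =>
          cell_sum_abs N β _ (by norm_num) fun k => ?_
        rw [abs_mul]
        have h1 : |ξ j k - W (a j) (a k)| ≤ 2 := by
          refine (abs_sub _ _).trans ?_
          have := hW1 (a j) (a k)
          rw [abs_of_nonneg (hξ j k).1]
          linarith [(hξ j k).2]
        calc _ ≤ 2 * 1 := mul_le_mul h1 (hc k) (abs_nonneg _) (by norm_num)
          _ = 2 := by norm_num
    simp only [hb]
    rw [e]
    refine (abs_add_le _ _).trans (add_le_add le_rfl ?_)
    have := norm_setIntegral_le_of_norm_le_const (μ := volume) (s := Set.Ioc (0:ℝ) 1)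
      (f := fun β => (∑ k, cell N k β * ((ξ j k - W (a j) (a k)) * c k)) - F α β)
      (C := err) (by simp) (fun β hβ => ?_)
    · simpa using this
    · obtain ⟨k, hk1, hk2⟩ := cell_exists hN hβ
      have e1 : g β = c k := cell_sum_of N k hk1 hk2 c
      have e2 : stepGraphon ξ α β = ξ j k := by
        rw [stepGraphon_eq, cell_sum_of N j hj1 hj2, cell_sum_of N k hk1 hk2]
      rw [cell_sum_of N k hk1 hk2]
      simp only [hF, e1, e2, Real.norm_eq_abs]
      have e3 : (ξ j k - W (a j) (a k)) * c k - (ξ j k - W α β) * c k =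
        (W α β - W (a j) (a k)) * c k := by ring
      rw [e3, abs_mul]
      refine (mul_le_of_le_one_right (abs_nonneg _) (hc k)).trans ?_
      refine (hWL α β (a j) (a k) ⟨hα.1.le, hα.2⟩ ⟨hβ.1.le, hβ.2⟩ (ha j) (ha k)).trans ?_
      have := mul_le_mul_of_nonneg_left
        (add_le_add (hdist j α hj1 hj2) (hdist k β hk1 hk2)) hLW
      rw [herr]
      linarith
  have hci := cell_int hN b
  rw [← hci]
  have hhi : IntegrableOn (fun α => |h α|) (Set.Ioc (0:ℝ) 1) :=
    intOn_bdd hhm.abs (C := 2) fun α => by rw [abs_abs]; exact hh2 α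
  have hci2 : IntegrableOn (fun _ : ℝ => err) (Set.Ioc (0:ℝ) 1) :=
    intOn_bdd measurable_const (C := |err|) fun _ => le_rfl
  have hmono := setIntegral_mono_on (μ := volume) (s := Set.Ioc (0:ℝ) 1)
    (f := fun α => ∑ j, cell N j α * b j) (g := fun α => |h α| + err)
    (intOn_bdd (cell_sum_meas N b) (C := ∑ j, |b j|) fun β =>
      cell_sum_abs N β b (Finset.sum_nonneg fun _ _ => abs_nonneg _) fun k =>
        Finset.single_le_sum (f := fun j => |b j|) (fun _ _ => abs_nonneg _) (Finset.mem_univ k))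
    (hhi.add hci2) measurableSet_Ioc hpt
  refine hmono.trans ?_
  rw [integral_add hhi hci2]
  have := hop g hgm hg1
  simp only [setIntegral_const, smul_eq_mul, Real.volume_real_Ioc]
  norm_num
  exact this

lemma l1dist_nonneg {𝒳 : Type*} [Fintype 𝒳] (ν ν' : 𝒳 → ℝ) : 0 ≤ l1dist ν ν' :=
  Finset.sum_nonneg fun _ _ => abs_nonneg _

lemma l1dist_simplex {𝒳 : Type*} [Fintype 𝒳] {ν ν' : 𝒳 → ℝ} (h : ν ∈ simplex 𝒳)
    (h' : ν' ∈ simplex 𝒳) : l1dist ν ν' ≤ 2 := by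
  have : l1dist ν ν' ≤ ∑ x, (ν x + ν' x) := Finset.sum_le_sum fun x _ => by
    rw [abs_le]; constructor <;> linarith [h.1 x, h'.1 x]
  rw [Finset.sum_add_distrib, h.2, h'.2] at this
  linarith

lemma simplex_le {𝒳 : Type*} [Fintype 𝒳] {ν : 𝒳 → ℝ} (h : ν ∈ simplex 𝒳) (x : 𝒳) :
    |ν x| ≤ 1 := by
  rw [abs_of_nonneg (h.1 x), ← h.2]
  exact Finset.single_le_sum (fun y _ => h.1 y) (Finset.mem_univ x)

lemma approxNbhd_mem {𝒳 : Type*} [Fintype 𝒳] {M : ℕ} {W : ℝ → ℝ → ℝ} (hW : IsGraphon W)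
    {ν : Fin M → 𝒳 → ℝ} (hν : ∀ n, ν n ∈ simplex 𝒳) (m : Fin M) :
    approxNbhd W ν m ∈ subProb 𝒳 := by
  refine ⟨fun x => mul_nonneg (by positivity) (Finset.sum_nonneg fun n _ =>
    mul_nonneg (hW.2.2 _ _).1 ((hν n).1 x)), ?_⟩
  simp only [approxNbhd]
  rw [← Finset.mul_sum, Finset.sum_comm]
  simp only [← Finset.mul_sum, (hν _).2, mul_one]
  have : ∑ n, W (rep M m) (rep M n) ≤ M := by
    refine (Finset.sum_le_sum fun j _ => (hW.2.2 _ _).2).trans ?_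
    simp
  calc (M:ℝ)⁻¹ * ∑ n, W (rep M m) (rep M n) ≤ (M:ℝ)⁻¹ * M := by gcongr
    _ ≤ 1 := inv_mul_le_one

lemma approxMF_mem {𝒳 𝒰 : Type*} [Fintype 𝒳] [Fintype 𝒰] {M : ℕ} {W : ℝ → ℝ → ℝ}
    (hW : IsGraphon W) {P : 𝒳 → 𝒰 → (𝒳 → ℝ) → 𝒳 → ℝ} (hP : IsKernel P)
    {μ0 : 𝒳 → ℝ} (hμ0 : μ0 ∈ simplex 𝒳) {πm : Fin M → ℕ → 𝒳 → 𝒰 → ℝ}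
    (hπ : ∀ m, IsPolicy (πm m)) (t : ℕ) (m : Fin M) : approxMF W P μ0 πm t m ∈ simplex 𝒳 := by
  induction t generalizing m with
  | zero => exact hμ0
  | succ t ih =>
    have hG := approxNbhd_mem hW ih m
    refine ⟨fun y => Finset.sum_nonneg fun x _ => mul_nonneg ((ih m).1 x)
      ((qk_mem hP (hπ m) t x hG).1 y), ?_⟩
    simp only [approxMF]
    rw [Finset.sum_comm]
    have := fun x => (qk_mem hP (hπ m) t x hG).2
    simp only [qk] at this
    simp only [← Finset.mul_sum, this, mul_one, (ih m).2]

lemma approxMF_eq {𝒳 𝒰 : Type*} [Fintype 𝒳] [Fintype 𝒰] {M : ℕ} (W : ℝ → ℝ → ℝ)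
    (P : 𝒳 → 𝒰 → (𝒳 → ℝ) → 𝒳 → ℝ) (μ0 : 𝒳 → ℝ) (πm : Fin M → ℕ → 𝒳 → 𝒰 → ℝ)
    (t : ℕ) (m : Fin M) :
    stateLaw P μ0 (fun t => approxNbhd W (approxMF W P μ0 πm t) m) (πm m) t =
      approxMF W P μ0 πm t m := by
  induction t with
  | zero => rfl
  | succ t ih =>
    funext x
    simp only [stateLaw, approxMF, ih]

lemma det_bound {𝒳 : Type*} [Fintype 𝒳] {N M : ℕ} (hN : 0 < N) (hM : 0 < M)
    {ξ : Fin N → Fin N → ℝ}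
    (hξ : ∀ i j, 0 ≤ ξ i j ∧ ξ i j ≤ 1) {W : ℝ → ℝ → ℝ} (hW : IsGraphon W) {LW : ℝ}
    (hLW : 0 ≤ LW) (hWL : GraphonLipschitz W LW) {ε : ℝ}
    (hop : ∀ g : ℝ → ℝ, Measurable g → (∀ β, |g β| ≤ 1) →
      (∫ α in Set.Ioc (0:ℝ) 1, |∫ β in Set.Ioc (0:ℝ) 1, (stepGraphon ξ α β - W α β) * g β|) ≤ ε)
    {ν : Fin M → 𝒳 → ℝ} (hν : ∀ n, ν n ∈ simplex 𝒳) :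
    (N:ℝ)⁻¹ * ∑ j, l1dist (fun x => (N:ℝ)⁻¹ * ∑ k, ξ j k * ν (blk hM k) x)
      (approxNbhd W ν (blk hM j)) ≤
      Fintype.card 𝒳 * (ε + 2 * LW * (1 / M + 1 / N) + M / N) := by
  have hN' : (0:ℝ) < N := by exact_mod_cast hN
  have key : ∀ x : 𝒳, (N:ℝ)⁻¹ * ∑ j, |(N:ℝ)⁻¹ * ∑ k, ξ j k * ν (blk hM k) x -
      approxNbhd W ν (blk hM j) x| ≤ ε + 2 * LW * (1 / M + 1 / N) + M / N := by
    intro x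
    have h1 := op_bound hN hξ hW hLW hWL hop (fun j => rep M (blk hM j))
      (fun j => rep_mem _) (fun j => rep_blk hM j) (fun k => ν (blk hM k) x)
      (fun k => simplex_le (hν _) x)
    have h2 : ∀ j : Fin N, |(N:ℝ)⁻¹ * ∑ k, ξ j k * ν (blk hM k) x -
        approxNbhd W ν (blk hM j) x| ≤
        |(N:ℝ)⁻¹ * ∑ k, (ξ j k - W (rep M (blk hM j)) (rep M (blk hM k))) * ν (blk hM k) x|
          + M / N := by
      intro j
      have h3 := blk_avg hN hM (fun n => W (rep M (blk hM j)) (rep M n) * ν n x) (fun n => by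
        rw [abs_mul]
        refine mul_le_one₀ ?_ (abs_nonneg _) (simplex_le (hν n) x)
        rw [abs_of_nonneg (hW.2.2 _ _).1]; exact (hW.2.2 _ _).2)
      have e : (N:ℝ)⁻¹ * ∑ k, ξ j k * ν (blk hM k) x - approxNbhd W ν (blk hM j) x =
          (N:ℝ)⁻¹ * ∑ k, (ξ j k - W (rep M (blk hM j)) (rep M (blk hM k))) * ν (blk hM k) x +
          ((N:ℝ)⁻¹ * ∑ k : Fin N, W (rep M (blk hM j)) (rep M (blk hM k)) * ν (blk hM k) x -
          (M:ℝ)⁻¹ * ∑ n, W (rep M (blk hM j)) (rep M n) * ν n x) := by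
        simp only [approxNbhd, sub_mul, Finset.sum_sub_distrib]
        ring
      rw [e]
      exact (abs_add_le _ _).trans (add_le_add le_rfl h3)
    have h4 := mul_le_mul_of_nonneg_left (Finset.sum_le_sum fun j (_ : j ∈ Finset.univ) => h2 j)
      (inv_nonneg.2 hN'.le)
    refine h4.trans ?_
    rw [Finset.sum_add_distrib, mul_add]
    refine add_le_add h1 (le_of_eq ?_)
    rw [Finset.sum_const, Finset.card_univ, Fintype.card_fin, nsmul_eq_mul]
    field_simp
  simp only [l1dist]
  rw [Finset.sum_comm, Finset.mul_sum]
  refine (Finset.sum_le_sum fun x _ => key x).trans ?_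
  rw [Finset.sum_const, Finset.card_univ, nsmul_eq_mul]

lemma l1_pert {𝒳 : Type*} [Fintype 𝒳] {N : ℕ} {ξ : Fin N → Fin N → ℝ}
    (hξ : ∀ i j, 0 ≤ ξ i j ∧ ξ i j ≤ 1) {ν ν' : Fin N → 𝒳 → ℝ} (hν : ∀ n, ν n ∈ simplex 𝒳)
    (hν' : ∀ n, ν' n ∈ simplex 𝒳) (i : Fin N) (h : ∀ k, k ≠ i → ν' k = ν k) (j : Fin N)
    (G : 𝒳 → ℝ) :
    l1dist (fun x => (N:ℝ)⁻¹ * ∑ k, ξ j k * ν' k x) G ≤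
      l1dist (fun x => (N:ℝ)⁻¹ * ∑ k, ξ j k * ν k x) G + 2 / N := by
  have h1 : ∀ x, |(N:ℝ)⁻¹ * ∑ k, ξ j k * ν' k x - (N:ℝ)⁻¹ * ∑ k, ξ j k * ν k x| ≤
      (N:ℝ)⁻¹ * |ν' i x - ν i x| := by
    intro x
    rw [← mul_sub, ← Finset.sum_sub_distrib, Finset.sum_eq_single i, ← mul_sub, abs_mul, abs_mul,
      abs_of_nonneg (by positivity : (0:ℝ) ≤ (N:ℝ)⁻¹), abs_of_nonneg (hξ j i).1]
    · exact mul_le_mul_of_nonneg_left (mul_le_of_le_one_left (abs_nonneg _) (hξ j i).2)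
        (by positivity)
    · intro k _ hk
      rw [h k hk, sub_self]
    · simp
  have h2 : l1dist (fun x => (N:ℝ)⁻¹ * ∑ k, ξ j k * ν' k x) G ≤
      (N:ℝ)⁻¹ * l1dist (ν' i) (ν i) + l1dist (fun x => (N:ℝ)⁻¹ * ∑ k, ξ j k * ν k x) G := by
    simp only [l1dist]
    rw [Finset.mul_sum, ← Finset.sum_add_distrib]
    exact Finset.sum_le_sum fun x _ => (abs_sub_le _ _ _).trans (add_le_add (h1 x) le_rfl)
  have h3 : (N:ℝ)⁻¹ * l1dist (ν' i) (ν i) ≤ 2 / N := by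
    rw [div_eq_inv_mul]
    exact mul_le_mul_of_nonneg_left (l1dist_simplex (hν' i) (hν i)) (by positivity)
  linarith

lemma reward_bdd {𝒳 𝒰 : Type*} [Fintype 𝒳] [Fintype 𝒰] {r : 𝒳 → 𝒰 → (𝒳 → ℝ) → ℝ} {Lr : ℝ}
    (hLr : 0 ≤ Lr) (hr : RewardLipschitz r Lr) :
    ∃ R : ℝ, 0 < R ∧ ∀ x u ν, ν ∈ subProb 𝒳 → |r x u ν| ≤ R := by
  have hs : 0 ≤ ∑ x, ∑ u, |r x u 0| :=
    Finset.sum_nonneg fun _ _ => Finset.sum_nonneg fun _ _ => abs_nonneg _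
  refine ⟨1 + Lr + ∑ x, ∑ u, |r x u 0|, by linarith, fun x u ν hν => ?_⟩
  have h1 : |r x u 0| ≤ ∑ x, ∑ u, |r x u 0| :=
    (Finset.single_le_sum (f := fun u => |r x u 0|) (fun _ _ => abs_nonneg _)
      (Finset.mem_univ u)).trans
    (Finset.single_le_sum (f := fun x => ∑ u, |r x u 0|)
      (fun _ _ => Finset.sum_nonneg fun _ _ => abs_nonneg _) (Finset.mem_univ x))
  have h2 := hr x u ν 0 hν ⟨fun _ => le_rfl, by simp⟩
  have h3 : l1dist ν 0 ≤ 1 := by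
    refine le_trans (le_of_eq ?_) hν.2
    exact Finset.sum_congr rfl fun x _ => by simp [abs_of_nonneg (hν.1 x)]
  have h4 := mul_le_mul_of_nonneg_left h3 hLr
  have h5 := abs_sub_abs_le_abs_sub (r x u ν) (r x u 0)
  linarith

end Aux

/-- under Assumptions (W) and (Lip), a solution (𝛑, 𝛍) of the M
equivalence classes method yields approximate Nash equilibria: for any ε, p > 0 there
exist M ∈ ℕ and N' ∈ ℕ such that for all N > N', the N-agent policy Γ_N(𝛑) (where 𝛑 is
the block-constant policy ensemble with value π^{α_m} on Ĩ_m = (m/M,(m+1)/M]) is an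
(ε,p)-Markov–Nash equilibrium of the N-agent graph game. -/
theorem eq_class_approximate_nash
    {𝒳 𝒰 : Type*} [Fintype 𝒳] [DecidableEq 𝒳] [Nonempty 𝒳] [Fintype 𝒰] [Nonempty 𝒰]
    (T : ℕ) (μ0 : 𝒳 → ℝ) (hμ0 : μ0 ∈ simplex 𝒳)
    (P : 𝒳 → 𝒰 → (𝒳 → ℝ) → 𝒳 → ℝ) (hP : IsKernel P)
    (r : 𝒳 → 𝒰 → (𝒳 → ℝ) → ℝ)
    (Lr LP LW : ℝ) (hrLip : RewardLipschitz r Lr) (hPLip : KernelLipschitz P LP)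
    (W : ℝ → ℝ → ℝ) (hW : IsGraphon W) (hWLip : GraphonLipschitz W LW)
    (ξ : (N : ℕ) → Fin N → Fin N → ℝ) (hξ : ∀ N, IsEdgeWeights (ξ N))
    (hWconv : OpConvergesTo (fun N => stepGraphon (ξ N)) W)
    (ε p : ℝ) (hε : 0 < ε) (hp : 0 < p) :
    ∃ M' : ℕ, ∀ M > M', ∀ πm : Fin M → ℕ → 𝒳 → 𝒰 → ℝ,
      IsEqClassSolution T W P r μ0 πm →
      ∃ N' : ℕ, ∀ N > N',
        ∀ πs : Fin N → ℕ → 𝒳 → 𝒰 → ℝ,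
          (∀ (j : Fin N) (m : Fin M),
            (((j : ℕ) : ℝ) + 1) / N ∈
              Set.Ioc (((m : ℕ) : ℝ) / M) ((((m : ℕ) : ℝ) + 1) / M) → πs j = πm m) →
          ∃ Wset : Finset (Fin N),
            ⌊(1 - p) * (N : ℝ)⌋ ≤ (Wset.card : ℤ) ∧
            ∀ i ∈ Wset, ∀ πd : ℕ → 𝒳 → 𝒰 → ℝ, IsPolicy πd →
              JN T r P μ0 (ξ N) (Function.update πs i πd) i - ε ≤
                JN T r P μ0 (ξ N) πs i := by
  classical
  -- nonnegative Lipschitz constants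
  obtain ⟨Lr', hLr0, hr'⟩ : ∃ L : ℝ, 0 ≤ L ∧ RewardLipschitz r L :=
    ⟨|Lr|, abs_nonneg _, fun x u ν ν' h h' => (hrLip x u ν ν' h h').trans
      (mul_le_mul_of_nonneg_right (le_abs_self _) (l1dist_nonneg _ _))⟩
  obtain ⟨LP', hLP0, hP'⟩ : ∃ L : ℝ, 0 ≤ L ∧ KernelLipschitz P L :=
    ⟨|LP|, abs_nonneg _, fun x u ν ν' h h' => (hPLip x u ν ν' h h').trans
      (mul_le_mul_of_nonneg_right (le_abs_self _) (l1dist_nonneg _ _))⟩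
  obtain ⟨LW', hLW0, hW'⟩ : ∃ L : ℝ, 0 ≤ L ∧ GraphonLipschitz W L :=
    ⟨|LW|, abs_nonneg _, fun a b a' b' h1 h2 h3 h4 => (hWLip a b a' b' h1 h2 h3 h4).trans
      (mul_le_mul_of_nonneg_right (le_abs_self _) (by positivity))⟩
  obtain ⟨R, hR0, hR⟩ := reward_bdd hLr0 hr'
  have hξ01 : ∀ N i j, 0 ≤ ξ N i j ∧ ξ N i j ≤ 1 := fun N i j => by
    rcases (hξ N).1 i j with h | h <;> rw [h] <;> norm_num
  -- constants
  set A : ℝ := (Fintype.card 𝒳 : ℝ) with hA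
  have hA0 : 0 < A := by rw [hA]; exact_mod_cast Fintype.card_pos
  set C : ℝ := T * (Lr' + R * (T * LP')) with hC
  have hC0 : 0 ≤ C := by positivity
  set K : ℝ := 2 + LP' + LP' * A with hK
  have hK1 : 1 ≤ K := by
    have : 0 ≤ LP' * A := by positivity
    linarith
  have hK0 : 0 < K := by linarith
  obtain ⟨η, hη0, hη⟩ : ∃ η : ℝ, 0 < η ∧ C * η ≤ ε / 2 := by
    refine ⟨ε / (2 * (C + 1)), by positivity, ?_⟩
    rw [mul_div_assoc', div_le_div_iff₀ (by positivity) two_pos]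
    nlinarith
  obtain ⟨κ, hκ0, hκ1, hκ2⟩ : ∃ κ : ℝ, 0 < κ ∧ A * (K ^ T * κ) ≤ η / 3 ∧ T * κ ≤ (η / 3) * p := by
    refine ⟨min (η / 3 / (A * K ^ T)) ((η / 3) * p / (T + 1)), by positivity, ?_, ?_⟩
    · rw [← mul_assoc]
      refine (mul_le_mul_of_nonneg_left (min_le_left _ _) (by positivity)).trans (le_of_eq ?_)
      field_simp
    · refine (mul_le_mul_of_nonneg_left (min_le_right _ _) (by positivity)).trans ?_
      rw [mul_div_assoc', div_le_iff₀ (by positivity)]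
      have : 0 ≤ η / 3 * p := by positivity
      nlinarith
  obtain ⟨N0, hN0⟩ := hWconv (κ / (10 * A)) (by positivity)
  obtain ⟨M', hM'⟩ := exists_nat_gt (A * (2 * LW') * 10 / κ)
  refine ⟨M', fun M hMM πm hsol => ?_⟩
  have hM : 0 < M := by omega
  have hMr : (0:ℝ) < M := by exact_mod_cast hM
  have hMM' : A * (2 * LW') * 10 / κ < M := hM'.trans (by exact_mod_cast hMM)
  obtain ⟨n1, hn1⟩ := exists_nat_gt (A * (2 * LW' + M) * 10 / κ)
  obtain ⟨n2, hn2⟩ := exists_nat_gt (4 / κ)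
  obtain ⟨n3, hn3⟩ := exists_nat_gt (6 / η)
  obtain ⟨n4, hn4⟩ := exists_nat_gt (1 / κ ^ 2)
  refine ⟨N0 + n1 + n2 + n3 + n4, fun N hN πs hπs => ?_⟩
  have hNpos : 0 < N := by omega
  have hNr : (0:ℝ) < N := by exact_mod_cast hNpos
  have hc1 : A * (2 * LW' + M) * 10 / κ < N := hn1.trans_le (by exact_mod_cast (by omega))
  have hc2 : 4 / κ < N := hn2.trans_le (by exact_mod_cast (by omega))
  have hc3 : 6 / η < N := hn3.trans_le (by exact_mod_cast (by omega))
  have hc4 : 1 / κ ^ 2 < N := hn4.trans_le (by exact_mod_cast (by omega))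
  have hd2 : 2 / (N:ℝ) ≤ κ / 2 := by
    rw [div_lt_iff₀ hκ0] at hc2
    rw [div_le_div_iff₀ hNr two_pos]
    linarith
  have hd3 : 2 / (N:ℝ) ≤ η / 3 := by
    rw [div_lt_iff₀ hη0] at hc3
    rw [div_le_div_iff₀ hNr three_pos]
    linarith
  have hd4 : (Real.sqrt N)⁻¹ ≤ κ := by
    rw [inv_le_comm₀ (Real.sqrt_pos.2 hNr) hκ0]
    apply Real.le_sqrt_of_sq_le
    rw [inv_pow, ← one_div]
    exact hc4.le
  have hpolm := hsol.1
  have hπs' : ∀ j, πs j = πm (blk hM j) := fun j => hπs j _ (blk_mem hM j)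
  have hpol : ∀ j, IsPolicy (πs j) := fun j => by rw [hπs' j]; exact hpolm _
  have hMFm := fun t n => approxMF_mem hW hP hμ0 hpolm t n
  set G : Fin N → ℕ → 𝒳 → ℝ := fun j t => approxNbhd W (approxMF W P μ0 πm t) (blk hM j) with hG
  have hGm : ∀ j t, G j t ∈ subProb 𝒳 := fun j t => approxNbhd_mem hW (hMFm t) _
  set Δ : ℕ → Fin N → ℝ := fun t j => l1dist
    (fun x => (N:ℝ)⁻¹ * ∑ k, ξ N j k * approxMF W P μ0 πm t (blk hM k) x) (G j t) with hΔ
  have hΔ0 : ∀ t j, 0 ≤ Δ t j := fun t j => l1dist_nonneg _ _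
  have hΔκ : ∀ t, (N:ℝ)⁻¹ * ∑ j, Δ t j ≤ κ / 2 := by
    intro t
    refine (det_bound hNpos hM (hξ01 N) hW hLW0 hW' (hN0 N (by omega)) (hMFm t)).trans ?_
    have b1 : A * (κ / (10 * A)) = κ / 10 := by field_simp
    have b2 : A * (2 * LW') / M ≤ κ / 10 := by
      rw [div_lt_iff₀ hκ0] at hMM'
      rw [div_le_div_iff₀ hMr (by norm_num)]
      linarith
    have b3 : A * (2 * LW' + M) / N ≤ κ / 10 := by
      rw [div_lt_iff₀ hκ0] at hc1
      rw [div_le_div_iff₀ hNr (by norm_num)]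
      linarith
    have e : A * (κ / (10 * A) + 2 * LW' * (1 / M + 1 / N) + M / N) =
        A * (κ / (10 * A)) + A * (2 * LW') / M + A * (2 * LW' + M) / N := by ring
    rw [e]
    linarith
  refine ⟨Finset.univ.filter fun i => ∑ t ∈ Finset.range T, Δ t i ≤ η / 3, ?_, ?_⟩
  · -- cardinality
    set S := Finset.univ.filter fun i : Fin N => ∑ t ∈ Finset.range T, Δ t i ≤ η / 3 with hS
    have h1 : ((Sᶜ.card : ℕ) : ℝ) * (η / 3) ≤ ∑ i, ∑ t ∈ Finset.range T, Δ t i := by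
      rw [← nsmul_eq_mul]
      refine (Finset.card_nsmul_le_sum Sᶜ (fun i => ∑ t ∈ Finset.range T, Δ t i) _ ?_).trans
        (Finset.sum_le_sum_of_subset_of_nonneg (Finset.subset_univ _)
          fun i _ _ => Finset.sum_nonneg fun t _ => hΔ0 t i)
      intro i hi
      rw [Finset.mem_compl, hS, Finset.mem_filter] at hi
      push Not at hi
      exact (hi (Finset.mem_univ _)).le
    have h2 : ∑ i, ∑ t ∈ Finset.range T, Δ t i ≤ T * (N * (κ / 2)) := by
      rw [Finset.sum_comm]
      refine (Finset.sum_le_sum (g := fun _ => (N:ℝ) * (κ / 2)) fun t _ => ?_).trans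
        (by simp)
      have := hΔκ t
      rwa [inv_mul_le_iff₀ hNr] at this
    have h3 : ((Sᶜ.card : ℕ) : ℝ) ≤ p * N := by
      have h4 : ((Sᶜ.card : ℕ) : ℝ) * (η / 3) ≤ (p * N) * (η / 3) := by
        have h5 := mul_le_mul_of_nonneg_right hκ2 hNr.le
        have h6 : 0 ≤ (T:ℝ) * κ * N := by positivity
        linarith
      exact le_of_mul_le_mul_right h4 (by positivity)
    have h7 : ((S.card : ℕ) : ℝ) + ((Sᶜ.card : ℕ) : ℝ) = N := by
      have := Finset.card_add_card_compl S
      rw [Fintype.card_fin] at this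
      exact_mod_cast this
    have h8 : ((⌊(1 - p) * (N : ℝ)⌋ : ℤ) : ℝ) ≤ ((S.card : ℤ) : ℝ) := by
      refine (Int.floor_le _).trans ?_
      push_cast
      linarith
    exact_mod_cast h8
  · intro i hi πd hπd
    have hi := (Finset.mem_filter.1 hi).2
    have hΔi : ∀ t < T, Δ t i ≤ η / 3 := fun t ht =>
      (Finset.single_le_sum (f := fun t => Δ t i) (fun t _ => hΔ0 t i)
        (Finset.mem_range.2 ht)).trans hi
    have main : ∀ π' : ℕ → 𝒳 → 𝒰 → ℝ, IsPolicy π' →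
        |JN T r P μ0 (ξ N) (Function.update πs i π') i - Jmf T r P μ0 (G i) π'| ≤ ε / 2 := by
      intro π' hπ'
      set πu := Function.update πs i π' with hπu
      have hui : πu i = π' := by simp [hπu]
      have hpu : ∀ j, IsPolicy (πu j) := fun j => by
        by_cases h : j = i
        · rw [h, hui]; exact hπ'
        · rw [hπu, Function.update_of_ne h]; exact hpol j
      have hpert : ∀ t j, l1dist
          (fun x => (N:ℝ)⁻¹ * ∑ k, ξ N j k * stateLaw P μ0 (G k) (πu k) t x) (G j t) ≤
          Δ t j + 2 / N := fun t j =>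
        l1_pert (ν := fun k => approxMF W P μ0 πm t (blk hM k))
          (ν' := fun k => stateLaw P μ0 (G k) (πu k) t) (hξ01 N) (fun k => hMFm t _)
          (fun k => stateLaw_mem hP (hpu k) hμ0 (hGm k) t) i (fun k hk => by
            simp only [hπu, Function.update_of_ne hk, hπs' k]
            exact approxMF_eq W P μ0 πm t (blk hM k)) j (G j t)
      have havg : ∀ t < T, (N:ℝ)⁻¹ * ∑ j, l1dist
          (fun x => (N:ℝ)⁻¹ * ∑ k, ξ N j k * stateLaw P μ0 (G k) (πu k) t x) (G j t) ≤ κ := by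
        intro t _
        refine (mul_le_mul_of_nonneg_left (Finset.sum_le_sum fun j _ => hpert t j)
          (inv_nonneg.2 hNr.le)).trans ?_
        rw [Finset.sum_add_distrib, mul_add, Finset.sum_const, Finset.card_univ,
          Fintype.card_fin, nsmul_eq_mul, inv_mul_cancel_left₀ hNr.ne']
        linarith [hΔκ t]
      have hch := chaos hNpos hP hμ0 hLP0 hP' (hξ01 N) hpu G hGm κ hd4 T havg
      have hem : ∀ t < T, EE (jointLaw P μ0 (ξ N) πu t)
          (fun X => l1dist (empNbhd (ξ N) X i) (G i t)) ≤ η := by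
        intro t ht
        refine (emp_bound (jointLaw_mem hP hμ0 (hξ01 N) hpu t) (hξ01 N)
          (fun k => stateLaw P μ0 (G k) (πu k) t) (K ^ t * κ)
          (fun f hf => hch t ht.le f hf) i (G i t)).trans ?_
        have g1 : A * (K ^ t * κ) ≤ A * (K ^ T * κ) := by
          have : K ^ t ≤ K ^ T := pow_le_pow_right₀ hK1 ht.le
          gcongr
        linarith [hpert t i, hΔi t ht]
      have := objective hP hLr0 hr' hR0 hR hμ0 hLP0 hP' (hξ01 N) hpu i (G i) (hGm i) η hη0.le T hem
      rw [hui] at this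
      exact this.trans hη
    have h1 := abs_le.1 (main πd hπd)
    have h2 := abs_le.1 (main (πs i) (hpol i))
    rw [Function.update_eq_self] at h2
    have h3 : Jmf T r P μ0 (G i) πd ≤ Jmf T r P μ0 (G i) (πs i) := by
      rw [hπs' i]
      exact hsol.2 (blk hM i) πd hπd
    linarith [h1.1, h1.2, h2.1, h2.2]

end GMFG
end
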